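/- arXiv:math/0203167 — 3 statements merged into one kernel-verified Lean document; each statement's English description precedes it below -/
import Mathlib

section
/- For every n ≥ 2 and every nonzero integer k, Wada's representation of type (1) with parameter k is faithful: the group homomorphism φ_k : B_n → Aut(F_n) determined by sending each generator σ_i to the automorphism σ̂_i^{(k)} that maps x_i to x_i^k x_{i+1} x_i^{−k}, maps x_{i+1} to x_i, and fixes all other free generators, is injective. -/
/-- The defining relations of the braid group on `m + 1` strands (`m` generators
`σ_1, …, σ_m`, indexed here by `Fin m`): the commutation relations
`σ_i σ_j = σ_j σ_i` for `|i - j| > 1` and the braid relations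
`σ_i σ_{i+1} σ_i = σ_{i+1} σ_i σ_{i+1}`. -/
def braidRels (m : ℕ) : Set (FreeGroup (Fin m)) :=
  {r | (∃ i j : Fin m, (i : ℕ) + 1 < (j : ℕ) ∧
        r = FreeGroup.of i * FreeGroup.of j * (FreeGroup.of i)⁻¹ * (FreeGroup.of j)⁻¹) ∨
       (∃ i j : Fin m, (i : ℕ) + 1 = (j : ℕ) ∧
        r = FreeGroup.of i * FreeGroup.of j * FreeGroup.of i *
            (FreeGroup.of j * FreeGroup.of i * FreeGroup.of j)⁻¹)}

/-- The index in `Fin n` of the generator `x_i` of `F_n` acted on by `σ_i`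
(the strand index `i`, `0`-based). -/
def xL (n : ℕ) (i : Fin (n - 1)) : Fin n := ⟨i, by have := i.isLt; omega⟩

/-- The index in `Fin n` of the generator `x_{i+1}` of `F_n` acted on by `σ_i`. -/
def xR (n : ℕ) (i : Fin (n - 1)) : Fin n := ⟨(i : ℕ) + 1, by have := i.isLt; omega⟩


namespace Wada
section grp
variable {G : Type*} [Group G]

def tt (s : ℕ → G) (m : ℕ) : ℕ → G
  | 0 => 1
  | d + 1 => tt s m d * (s (m - d))⁻¹

/-- `t_j = s_m⁻¹ ⋯ s_j⁻¹`. -/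
def t (s : ℕ → G) (m j : ℕ) : G := tt s m (m + 1 - j)

theorem t_top (s : ℕ → G) (m : ℕ) : t s m (m + 1) = 1 := by simp [t, tt]

theorem t_step (s : ℕ → G) (m j : ℕ) (h : j ≤ m) : t s m j = t s m (j + 1) * (s j)⁻¹ := by
  unfold t
  have : m + 1 - j = (m + 1 - (j + 1)) + 1 := by omega
  rw [this, tt]
  congr 3
  omega

def A (s : ℕ → G) (m j : ℕ) : G := t s m (j + 1) * s j * (t s m j)⁻¹

structure Rel (s : ℕ → G) (N : ℕ) : Prop where
  comm : ∀ i j, i + 1 < j → Commute (s i) (s j)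
  braid : ∀ i, i + 1 < N → s i * s (i + 1) * s i = s (i + 1) * s i * s (i + 1)

variable {s : ℕ → G} {N m : ℕ}

theorem desc {P : ℕ → Prop} (m : ℕ) (h0 : P m) (h1 : ∀ j < m, P (j + 1) → P j) :
    ∀ j ≤ m, P j := by
  intro j hj
  induction hj using Nat.decreasingInduction with
  | self => exact h0
  | of_succ k hk ih => exact h1 k hk ih

theorem t_comm (R : Rel s N) {i j : ℕ} (hj : j ≤ m + 1) (h : i + 1 < j) :
    Commute (s i) (t s m j) := by
  revert h
  refine desc (P := fun j => i + 1 < j → Commute (s i) (t s m j)) (m + 1) ?_ ?_ j hj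
  · intro _; rw [t_top]; exact Commute.one_right _
  · intro j hj ih h
    rw [t_step _ _ _ (by omega)]
    exact (ih (by omega)).mul_right (R.comm _ _ h).inv_right

theorem t_shift (R : Rel s N) (hm : m < N) {i j : ℕ} (hj : j ≤ i) (h : i + 1 ≤ m) :
    t s m j * s (i + 1) = s i * t s m j := by
  refine desc (P := fun j => t s m j * s (i + 1) = s i * t s m j) i ?_ ?_ j hj
  · rw [t_step _ _ _ (by omega), t_step _ _ _ (by omega)]
    have h1 : s i * t s m (i + 1 + 1) = t s m (i + 1 + 1) * s i :=
      t_comm R (j := i + 2) (by omega) (by omega)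
    have h2 := R.braid i (by omega)
    have h3 : (s (i+1))⁻¹ * (s i)⁻¹ * s (i + 1) = s i * (s (i+1))⁻¹ * (s i)⁻¹ := by
      rw [eq_mul_inv_iff_mul_eq, eq_mul_inv_iff_mul_eq]
      simp only [mul_assoc] at h2 ⊢
      rw [← h2]; group
    calc _ = t s m (i + 1 + 1) * ((s (i+1))⁻¹ * (s i)⁻¹ * s (i + 1)) := by group
      _ = (t s m (i + 1 + 1) * s i) * (s (i+1))⁻¹ * (s i)⁻¹ := by rw [h3]; group
      _ = _ := by rw [← h1]; group
  · intro j hj ih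
    rw [t_step _ _ _ (by omega)]
    have h1 := (R.comm j (i + 1) (by omega)).inv_left.eq
    rw [mul_assoc, h1, ← mul_assoc, ih, mul_assoc]

theorem A_top : A s m m = s m * s m := by
  rw [A, t_step _ _ _ le_rfl, t_top]; group

theorem A_eq {j : ℕ} (h : j ≤ m) : A s m j = t s m (j + 1) * (s j * s j) * (t s m (j + 1))⁻¹ := by
  rw [A, t_step _ _ _ h]; group

theorem t_mul {j : ℕ} (h : j ≤ m) : t s m j * (s j)⁻¹ = (A s m j)⁻¹ * t s m (j + 1) := by
  rw [A_eq h, t_step _ _ _ h]; group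

theorem A_comm_lt (R : Rel s N) {i j : ℕ} (hj : j ≤ m) (h : i + 1 < j) :
    Commute (s i) (A s m j) := by
  rw [A]
  exact ((t_comm R (by omega) (by omega)).mul_right (R.comm _ _ h)).mul_right
    (t_comm R (by omega) (by omega)).inv_right

theorem A_comm_gt (R : Rel s N) (hm : m < N) {i j : ℕ} (hj : j < i) (h : i < m) :
    Commute (s i) (A s m j) := by
  have h1 := t_shift R hm (i := i) (j := j + 1) (by omega) (by omega)
  have h2 := t_shift R hm (i := i) (j := j) (by omega) (by omega)
  have h3 := (R.comm j (i + 1) (by omega)).eq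
  have h4 : s (i + 1) * (t s m j)⁻¹ = (t s m j)⁻¹ * s i := by
    rw [mul_inv_eq_iff_eq_mul, mul_assoc, ← h2]; group
  change _ * _ = _ * _
  rw [A, mul_assoc _ _ (s i), ← h4]
  simp only [← mul_assoc]
  rw [← h1, mul_assoc _ (s (i + 1)), ← h3]
  simp only [mul_assoc]

theorem A_succ (R : Rel s N) (hm : m < N) {j : ℕ} (hj : j < m) :
    A s m j = s j * A s m (j + 1) * (s j)⁻¹ := by
  have h1 : s j * t s m (j + 1 + 1) = t s m (j + 1 + 1) * s j :=
      t_comm R (j := j + 2) (by omega) (by omega)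
  have h2 := R.braid j (by omega)
  rw [A_eq (by omega), A_eq (by omega), t_step s m (j+1) (by omega)]
  generalize t s m (j + 1 + 1) = T at *
  generalize s (j + 1) = b at *
  generalize s j = a at *
  have h3 : b⁻¹ * (a * a) * b = a * (b * b) * a⁻¹ := by
    rw [eq_mul_inv_iff_mul_eq]
    calc b⁻¹ * (a * a) * b * a = b⁻¹ * a * (a * b * a) := by group
      _ = b⁻¹ * a * (b * a * b) := by rw [h2]
      _ = b⁻¹ * (a * b * a) * b := by group
      _ = _ := by rw [h2]; group
  calc _ = T * (b⁻¹ * (a * a) * b) * T⁻¹ := by group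
    _ = (T * a) * (b * b) * (T * a)⁻¹ := by rw [h3]; group
    _ = _ := by rw [← h1]; group

theorem A_conj (R : Rel s N) (hm : m < N) {j : ℕ} (hj : j < m) :
    (s j)⁻¹ * A s m (j + 1) * s j = A s m (j + 1) * A s m j * (A s m (j + 1))⁻¹ := by
  have h1 : s j * t s m (j + 1 + 1) = t s m (j + 1 + 1) * s j :=
      t_comm R (j := j + 2) (by omega) (by omega)
  have h2 := R.braid j (by omega)
  rw [A_eq (j := j) (by omega), A_eq (by omega), t_step s m (j+1) (by omega)]
  generalize t s m (j + 1 + 1) = T at *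
  generalize s (j + 1) = b at *
  generalize s j = a at *
  have h3 : a⁻¹ * (b * b) * a = b * (a * a) * b⁻¹ := by
    rw [eq_mul_inv_iff_mul_eq]
    calc a⁻¹ * (b * b) * a * b = a⁻¹ * b * (b * a * b) := by group
      _ = a⁻¹ * b * (a * b * a) := by rw [← h2]
      _ = a⁻¹ * (b * a * b) * a := by group
      _ = _ := by rw [← h2]; group
  have h4 : a⁻¹ * T = T * a⁻¹ := by
    rw [inv_mul_eq_iff_eq_mul, ← mul_assoc, h1]; group
  calc _ = (a⁻¹ * T) * (b * b) * (a⁻¹ * T)⁻¹ := by group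
    _ = T * (a⁻¹ * (b * b) * a) * T⁻¹ := by rw [h4]; group
    _ = _ := by rw [h3]; group

def H (s : ℕ → G) (m : ℕ) : Subgroup G := Subgroup.closure {g | ∃ i < m, g = s i}
def U (s : ℕ → G) (m : ℕ) : Subgroup G :=
  (FreeGroup.lift (fun j : Fin (m + 1) => A s m j)).range

theorem U_eq : U s m = Subgroup.closure {g | ∃ j ≤ m, g = A s m j} := by
  rw [U, FreeGroup.range_lift_eq_closure]
  congr 1
  ext g
  constructor
  · rintro ⟨j, rfl⟩
    exact ⟨j, by omega, rfl⟩
  · rintro ⟨j, hj, rfl⟩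
    exact ⟨⟨j, by omega⟩, rfl⟩

theorem A_mem {j : ℕ} (hj : j ≤ m) : A s m j ∈ U s m := by
  rw [U_eq]; exact Subgroup.subset_closure ⟨j, hj, rfl⟩

theorem s_mem {i : ℕ} (hi : i < m) : s i ∈ H s m := Subgroup.subset_closure ⟨i, hi, rfl⟩

theorem conj_mem (R : Rel s N) (hm : m < N) {i : ℕ} (hi : i < m) {j : ℕ} (hj : j ≤ m) :
    s i * A s m j * (s i)⁻¹ ∈ U s m ∧ (s i)⁻¹ * A s m j * s i ∈ U s m := by
  have cc : Commute (s i) (A s m j) →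
      s i * A s m j * (s i)⁻¹ ∈ U s m ∧ (s i)⁻¹ * A s m j * s i ∈ U s m := by
    intro h
    have e1 : s i * A s m j * (s i)⁻¹ = A s m j := by rw [h.eq]; group
    have e2 : (s i)⁻¹ * A s m j * s i = A s m j := by rw [mul_assoc, ← h.eq]; group
    rw [e1, e2]
    exact ⟨A_mem hj, A_mem hj⟩
  rcases lt_trichotomy i j with h | h | h
  · rcases Nat.lt_or_ge (i + 1) j with h' | h'
    · exact cc (A_comm_lt R hj h')
    · obtain rfl : j = i + 1 := by omega
      constructor
      · rw [← A_succ R hm hi]; exact A_mem hi.le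
      · rw [A_conj R hm hi]
        exact mul_mem (mul_mem (A_mem hj) (A_mem hi.le)) (inv_mem (A_mem hj))
  · subst h
    have e1 := A_succ R hm hi
    have e2 := A_conj R hm hi
    constructor
    · have : s i * A s m i * (s i)⁻¹ = (A s m i)⁻¹ * A s m (i + 1) * A s m i := by
        have e3 : A s m i = (A s m (i + 1))⁻¹ * ((s i)⁻¹ * A s m (i + 1) * s i) * A s m (i + 1) := by
          rw [e2]; group
        have e4 : s i * A s m i * (s i)⁻¹ =
            (s i * A s m (i + 1) * (s i)⁻¹)⁻¹ * A s m (i + 1) * (s i * A s m (i + 1) * (s i)⁻¹) := by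
          conv_lhs => rw [e3]
          group
        rw [e4, ← e1]
      rw [this]
      exact mul_mem (mul_mem (inv_mem (A_mem hi.le)) (A_mem hi)) (A_mem hi.le)
    · rw [e1]
      convert A_mem (s := s) hi using 1
      group
  · exact cc (A_comm_gt R hm h hi)

theorem conj_closure {S : Set G} {g : G} (h : ∀ a ∈ S, g * a * g⁻¹ ∈ Subgroup.closure S) :
    ∀ a ∈ Subgroup.closure S, g * a * g⁻¹ ∈ Subgroup.closure S := by
  intro a ha
  have : Subgroup.closure S ≤ (Subgroup.closure S).comap (MulAut.conj g).toMonoidHom := by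
    rw [Subgroup.closure_le]
    intro x hx
    simpa using h x hx
  simpa using this ha

theorem U_conj (R : Rel s N) (hm : m < N) {h : G} (hh : h ∈ H s m) :
    ∀ u ∈ U s m, h * u * h⁻¹ ∈ U s m := by
  induction hh using Subgroup.closure_induction_right with
  | one => simp
  | mul_right x hx y hy ih =>
    obtain ⟨i, hi, rfl⟩ := hy
    intro u hu
    have : s i * u * (s i)⁻¹ ∈ U s m := by
      revert u
      rw [U_eq]
      apply conj_closure
      rintro _ ⟨j, hj, rfl⟩
      rw [← U_eq]; exact (conj_mem R hm hi hj).1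
    have := ih _ this
    convert this using 1; group
  | mul_inv_cancel x hx y hy ih =>
    obtain ⟨i, hi, rfl⟩ := hy
    intro u hu
    have : (s i)⁻¹ * u * (s i)⁻¹⁻¹ ∈ U s m := by
      revert u
      rw [U_eq]
      apply conj_closure
      rintro _ ⟨j, hj, rfl⟩
      rw [← U_eq, inv_inv]; exact (conj_mem R hm hi hj).2
    have := ih _ this
    convert this using 1; group

theorem decomp (R : Rel s N) (hm : m < N) {g : G} (hg : g ∈ H s (m + 1)) :
    ∃ u ∈ U s m, ∃ h ∈ H s m, ∃ j ≤ m + 1, g = u * h * t s m j := by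
  have key1 : ∀ u ∈ U s m, ∀ h ∈ H s m, ∀ v ∈ U s m, ∀ j ≤ m + 1,
      ∃ u' ∈ U s m, ∃ h' ∈ H s m, ∃ j' ≤ m + 1, u * h * (v * t s m j) = u' * h' * t s m j' := by
    intro u hu h hh v hv j hj
    refine ⟨u * (h * v * h⁻¹), mul_mem hu (U_conj R hm hh v hv), h, hh, j, hj, ?_⟩
    group
  have key2 : ∀ u ∈ U s m, ∀ h ∈ H s m, ∀ v ∈ H s m, ∀ j ≤ m + 1,
      ∃ u' ∈ U s m, ∃ h' ∈ H s m, ∃ j' ≤ m + 1, u * h * (v * t s m j) = u' * h' * t s m j' := by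
    intro u hu h hh v hv j hj
    exact ⟨u, hu, h * v, mul_mem hh hv, j, hj, by group⟩
  have cases : ∀ i ≤ m, ∀ j ≤ m + 1, i + 1 < j ∨ j = i + 1 ∨ j = i ∨ ∃ i', i = i' + 1 ∧ j ≤ i' := by
    intro i hi j hj
    by_cases h : j < i
    · right; right; right; exact ⟨i - 1, by omega, by omega⟩
    · omega
  induction hg using Subgroup.closure_induction_right with
  | one => exact ⟨1, one_mem _, 1, one_mem _, m + 1, le_rfl, by simp [t_top]⟩
  | mul_right x hx y hy ih =>
    obtain ⟨i, hi, rfl⟩ := hy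
    obtain ⟨u, hu, h, hh, j, hj, rfl⟩ := ih
    rw [mul_assoc _ (t s m j)]
    rcases cases i (by omega) j hj with h1 | rfl | rfl | ⟨i', rfl, h1⟩
    · rw [← (t_comm R hj h1).eq]
      exact key2 u hu h hh _ (s_mem (by omega)) j hj
    · have := t_mul (s := s) (m := m) (j := i) (by omega)
      have : t s m (i + 1) * s i = A s m i * t s m i := by
        rw [A]; group
      rw [this]
      exact key1 u hu h hh _ (A_mem (by omega)) i (by omega)
    · rw [t_step s m j (by omega), inv_mul_cancel_right]
      exact ⟨u, hu, h, hh, j + 1, by omega, rfl⟩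
    · rw [t_shift R hm h1 (by omega)]
      exact key2 u hu h hh _ (s_mem (by omega)) j hj
  | mul_inv_cancel x hx y hy ih =>
    obtain ⟨i, hi, rfl⟩ := hy
    obtain ⟨u, hu, h, hh, j, hj, rfl⟩ := ih
    rw [mul_assoc _ (t s m j)]
    rcases cases i (by omega) j hj with h1 | rfl | rfl | ⟨i', rfl, h1⟩
    · rw [← (t_comm R hj h1).inv_left.eq]
      exact key2 u hu h hh _ (inv_mem (s_mem (by omega))) j hj
    · rw [← t_step s m i (by omega)]
      exact ⟨u, hu, h, hh, i, by omega, rfl⟩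
    · rw [t_mul (by omega)]
      exact key1 u hu h hh _ (inv_mem (A_mem (by omega))) (j + 1) (by omega)
    · have : t s m j * (s (i' + 1))⁻¹ = (s i')⁻¹ * t s m j := by
        rw [mul_inv_eq_iff_eq_mul, mul_assoc, t_shift R hm h1 (by omega)]; group
      rw [this]
      exact key2 u hu h hh _ (inv_mem (s_mem (by omega))) j hj

end grp

section pingpong
open FreeGroup

theorem pow_starts {α : Type*} [DecidableEq α] (w : α × Bool) (n : ℕ) (g : FreeGroup α)
    (h : g ∉ startsWith (w.1, !w.2)) : FreeGroup.mk [w] ^ (n + 1) * g ∈ startsWith w := by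
  induction n with
  | zero => simpa using startsWith_mk_mul g h
  | succ n ih =>
    rw [pow_succ', mul_assoc]
    apply startsWith_mk_mul
    intro h'
    have hd : Disjoint (startsWith w) (startsWith (w.1, !w.2)) := by
      rw [startsWith.disjoint_iff_ne]
      intro e
      have := congrArg Prod.snd e
      simp at this
    exact Set.disjoint_left.mp hd ih h'

theorem lift_mk_pow_inj {α : Type*} [DecidableEq α] [Nontrivial α] (b : Bool) (n : ℕ) :
    Function.Injective (FreeGroup.lift fun j : α => FreeGroup.mk [(j, b)] ^ (n + 1)) := by
  apply FreeGroup.injective_lift_of_ping_pong _ (fun j => startsWith (j, b))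
    (fun j => startsWith (j, !b))
  · intro j
    exact ⟨_, by simpa using pow_starts (j, b) n 1 (by simp [startsWith])⟩
  · intro i j hij
    simpa [Function.onFun] using hij
  · intro i j hij
    simpa [Function.onFun] using hij
  · intro i j
    simp
  · intro j
    rintro _ ⟨g, hg, rfl⟩
    exact pow_starts (j, b) n g hg
  · intro j
    rintro _ ⟨g, hg, rfl⟩
    have := pow_starts (j, !b) n g (by simpa using hg)
    have e : (FreeGroup.mk [(j, b)])⁻¹ = FreeGroup.mk [(j, !b)] := by simp [FreeGroup.inv_mk, invRev]
    rw [← e, inv_pow] at this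
    exact this

theorem lift_zpow_inj {α : Type*} [DecidableEq α] [Nontrivial α] (k : ℤ) (hk : k ≠ 0) :
    Function.Injective (FreeGroup.lift fun j : α => FreeGroup.of j ^ k) := by
  obtain ⟨n, rfl | rfl⟩ := Int.eq_nat_or_neg k
  · obtain ⟨n, rfl⟩ := Nat.exists_eq_succ_of_ne_zero (n := n) (by rintro rfl; simp at hk)
    convert lift_mk_pow_inj (α := α) true n using 5
    simp only [zpow_natCast]; rfl
  · obtain ⟨n, rfl⟩ := Nat.exists_eq_succ_of_ne_zero (n := n) (by rintro rfl; simp at hk)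
    convert lift_mk_pow_inj (α := α) false n using 5 with j
    have e : (FreeGroup.of j)⁻¹ = FreeGroup.mk [(j, false)] := by
      simp [FreeGroup.of, FreeGroup.inv_mk, invRev]
    rw [zpow_neg, zpow_natCast, ← inv_pow, e]
end pingpong

section act
variable {N : ℕ}

def X (N j : ℕ) : FreeGroup (Fin (N + 1)) := if h : j < N + 1 then FreeGroup.of ⟨j, h⟩ else 1

theorem X_val (j : Fin (N + 1)) : X N j = FreeGroup.of j := dif_pos j.2

theorem X_ne_one {j : ℕ} (h : j ≤ N) : X N j ≠ 1 := by
  rw [X, dif_pos (by omega)]; exact FreeGroup.of_ne_one _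

theorem hom_ext {M : Type*} [Group M] {f g : FreeGroup (Fin (N + 1)) →* M}
    (h : ∀ j, f (X N j) = g (X N j)) (x) : f x = g x := by
  have : f = g := by
    ext j
    rw [← X_val]; exact h _
  rw [this]

/-- Kill the generator with index `q`. -/
def pr (N q : ℕ) : FreeGroup (Fin (N + 1)) →* FreeGroup (Fin (N + 1)) :=
  FreeGroup.lift fun j => if (j : ℕ) = q then 1 else FreeGroup.of j

theorem pr_self (q : ℕ) : pr N q (X N q) = 1 := by
  unfold X; split_ifs <;> simp [pr]

theorem pr_ne {q j : ℕ} (h : j ≠ q) : pr N q (X N j) = X N j := by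
  unfold X; split_ifs <;> simp [pr, h]

/-- Permutations detecting the conjugator. -/
noncomputable def rho (N q : ℕ) :
    FreeGroup (Fin (N + 1)) →* Equiv.Perm (FreeGroup (Fin (N + 1)) × Bool) :=
  FreeGroup.lift fun j => if (j : ℕ) = q then Equiv.swap (1, false) (1, true)
    else (Equiv.mulLeft (FreeGroup.of j)).prodCongr (Equiv.refl Bool)

theorem rho_fst (q : ℕ) (W : FreeGroup (Fin (N + 1))) :
    ∀ y, (rho N q W y).1 = pr N q W * y.1 := by
  induction W using FreeGroup.induction_on with
  | C1 => simp
  | of j =>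
    intro y
    by_cases h : (j : ℕ) = q
    · simp only [rho, pr, FreeGroup.lift_apply_of, h, if_true, one_mul]
      rw [Equiv.swap_apply_def]
      split_ifs with h1 h2 <;> simp_all
    · simp [rho, pr, h]
  | inv_of j ih =>
    intro y
    have := ih ((rho N q (FreeGroup.of j))⁻¹ y)
    rw [← Equiv.Perm.mul_apply, mul_inv_cancel, Equiv.Perm.one_apply] at this
    rw [map_inv, map_inv, this]
    simp
  | mul x y ihx ihy =>
    intro z
    rw [map_mul, map_mul, Equiv.Perm.mul_apply, ihx, ihy, mul_assoc]

theorem pr_eq_one {q : ℕ} (hq : q ≤ N) {W : FreeGroup (Fin (N + 1))}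
    (h : W * X N q * W⁻¹ = X N q) : pr N q W = 1 := by
  have hr : rho N q (X N q) = Equiv.swap (1, false) (1, true) := by
    rw [X, dif_pos (by omega)]; simp [rho]
  have h1 : rho N q (X N q) (rho N q W (1, false)) = rho N q W (1, true) := by
    rw [← Equiv.swap_apply_left (1, false) ((1, true) : FreeGroup (Fin (N + 1)) × Bool), ← hr,
      ← Equiv.Perm.mul_apply, ← Equiv.Perm.mul_apply, ← map_mul, ← map_mul]
    congr 2
    exact (mul_inv_eq_iff_eq_mul.mp h).symm
  by_contra hne
  have h2 := rho_fst q W (1, false)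
  simp only [mul_one] at h2
  rw [hr, Equiv.swap_apply_of_ne_of_ne] at h1
  · have := (rho N q W).injective h1
    simp at this
  · intro e; rw [e] at h2; exact hne h2.symm
  · intro e; rw [e] at h2; exact hne h2.symm

variable {G : Type*} [Group G]

structure Act (s : ℕ → G) (N : ℕ) (k : ℤ) (Φ : G →* MulAut (FreeGroup (Fin (N + 1)))) : Prop where
  a1 : ∀ i < N, Φ (s i) (X N i) = X N i ^ k * X N (i + 1) * X N i ^ (-k)
  a2 : ∀ i < N, Φ (s i) (X N (i + 1)) = X N i
  a3 : ∀ i < N, ∀ j, j ≠ i → j ≠ i + 1 → Φ (s i) (X N j) = X N j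

variable {s : ℕ → G} {m : ℕ} {k : ℤ} {Φ : G →* MulAut (FreeGroup (Fin (N + 1)))}

theorem inv_app (g : G) (x) : Φ g⁻¹ (Φ g x) = x := by
  rw [← MulAut.mul_apply, ← map_mul]; simp

theorem app_inv (g : G) (x) : Φ g (Φ g⁻¹ x) = x := by
  rw [← MulAut.mul_apply, ← map_mul]; simp

theorem H_fix (T : Act s N k Φ) (hm : m ≤ N) {h : G} (hh : h ∈ H s m) {j : ℕ} (hj : m < j) :
    Φ h (X N j) = X N j := by
  induction hh using Subgroup.closure_induction with
  | mem x hx =>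
    obtain ⟨i, hi, rfl⟩ := hx
    exact T.a3 i (by omega) j (by omega) (by omega)
  | one => simp
  | mul x y _ _ ihx ihy => rw [map_mul, MulAut.mul_apply, ihy, ihx]
  | inv x _ ih => conv_lhs => rw [← ih]
                  exact inv_app _ _

theorem H_pr (T : Act s N k Φ) (hm : m ≤ N) {h : G} (hh : h ∈ H s m) :
    ∀ x, pr N (m + 1) (Φ h x) = Φ h (pr N (m + 1) x) := by
  induction hh using Subgroup.closure_induction with
  | mem x hx =>
    obtain ⟨i, hi, rfl⟩ := hx
    have hi' : i < N := by omega
    refine hom_ext (f := (pr N (m + 1)).comp (Φ (s i)).toMonoidHom)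
      (g := (Φ (s i)).toMonoidHom.comp (pr N (m + 1))) ?_
    intro j
    change pr N (m + 1) (Φ (s i) (X N j)) = Φ (s i) (pr N (m + 1) (X N j))
    by_cases h1 : j = i
    · subst h1
      rw [pr_ne (j := j) (by omega), T.a1 _ hi']
      simp only [map_mul, map_zpow]
      rw [pr_ne (by omega), pr_ne (by omega)]
    · by_cases h2 : j = i + 1
      · subst h2
        rw [pr_ne (j := i + 1) (by omega), T.a2 _ hi', pr_ne (by omega)]
      · rw [T.a3 _ hi' _ h1 h2]
        by_cases h3 : j = m + 1
        · subst h3; rw [pr_self]; simp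
        · rw [pr_ne h3, T.a3 _ hi' _ h1 h2]
  | one => simp
  | mul x y _ _ ihx ihy => intro z; rw [map_mul, MulAut.mul_apply, MulAut.mul_apply, ihx, ihy]
  | inv x _ ih =>
    intro z
    have := ih (Φ x⁻¹ z)
    rw [app_inv] at this
    rw [this, inv_app]

theorem A_pr (R : Rel s N) (T : Act s N k Φ) (hm : m < N) :
    ∀ j ≤ m, ∀ x, pr N (m + 1) (Φ (A s m j) x) = pr N (m + 1) x := by
  refine desc m ?_ ?_
  · refine hom_ext (f := (pr N (m + 1)).comp (Φ (A s m m)).toMonoidHom)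
      (g := pr N (m + 1)) ?_
    intro j
    change pr N (m + 1) (Φ (A s m m) (X N j)) = pr N (m + 1) (X N j)
    rw [A_top, map_mul, MulAut.mul_apply]
    by_cases h1 : j = m
    · subst h1
      rw [T.a1 _ hm]
      simp only [map_mul, map_zpow]
      rw [T.a1 _ hm, T.a2 _ hm]
      simp only [map_mul, map_zpow]
      rw [pr_self, pr_ne (by omega)]
      group
    · by_cases h2 : j = m + 1
      · subst h2
        rw [T.a2 _ hm, T.a1 _ hm]
        simp only [map_mul, map_zpow]
        rw [pr_self]; group
      · rw [T.a3 _ hm _ h1 h2, T.a3 _ hm _ h1 h2]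
  · intro j hj ih x
    have hs : s j ∈ H s m := s_mem hj
    rw [A_succ R hm hj, map_mul, map_mul, MulAut.mul_apply, MulAut.mul_apply,
      H_pr T hm.le hs, ih, H_pr T hm.le (inv_mem hs), app_inv]

theorem A_X (R : Rel s N) (T : Act s N k Φ) (hm : m < N) :
    ∀ j ≤ m, Φ (A s m j) (X N (m + 1)) = X N j ^ k * X N (m + 1) * X N j ^ (-k) := by
  refine desc m ?_ ?_
  · rw [A_top, map_mul, MulAut.mul_apply, T.a2 _ hm, T.a1 _ hm]
  · intro j hj ih
    have hs : s j ∈ H s m := s_mem hj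
    rw [A_succ R hm hj, map_mul, map_mul, MulAut.mul_apply, MulAut.mul_apply,
      H_fix T hm.le (inv_mem hs) (by omega), ih]
    simp only [map_mul, map_zpow]
    rw [T.a2 _ (by omega), H_fix T hm.le hs (by omega)]

theorem U_pr (R : Rel s N) (T : Act s N k Φ) (hm : m < N) {u : G} (hu : u ∈ U s m) :
    ∀ x, pr N (m + 1) (Φ u x) = pr N (m + 1) x := by
  rw [U_eq] at hu
  induction hu using Subgroup.closure_induction with
  | mem x hx =>
    obtain ⟨j, hj, rfl⟩ := hx
    exact A_pr R T hm j hj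
  | one => simp
  | mul x y _ _ ihx ihy => intro z; rw [map_mul, MulAut.mul_apply, ihx, ihy]
  | inv x _ ih =>
    intro z
    rw [← ih, app_inv]

/-- The free group hom recording the push word. -/
noncomputable def th (N m : ℕ) (k : ℤ) : FreeGroup (Fin (m + 1)) →* FreeGroup (Fin (N + 1)) :=
  FreeGroup.lift fun j => X N j ^ (-k)

theorem th_inj (hm : m < N) (hk : k ≠ 0) : Function.Injective (th N m k) := by
  have : Nontrivial (Fin (N + 1)) := Fin.nontrivial_iff_two_le.mpr (by omega)
  have e : th N m k = (FreeGroup.lift fun j : Fin (N + 1) => FreeGroup.of j ^ (-k)).comp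
      (FreeGroup.map (Fin.castLE (by omega : m + 1 ≤ N + 1))) := by
    ext j
    have : FreeGroup.of (Fin.castLE (by omega : m + 1 ≤ N + 1) j) = X N j := (X_val _).symm
    simp [th, ← this]
  rw [e]
  exact (lift_zpow_inj (-k) (by simpa using hk)).comp
    (FreeGroup.map_injective (Fin.castLE_injective _))

theorem push (R : Rel s N) (T : Act s N k Φ) (hm : m < N) (w : FreeGroup (Fin (m + 1))) :
    ∃ W, Φ (FreeGroup.lift (fun j : Fin (m + 1) => A s m j) w) (X N (m + 1)) =
      W * X N (m + 1) * W⁻¹ ∧ pr N (m + 1) W = (th N m k w)⁻¹ := by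
  induction w using FreeGroup.induction_on with
  | C1 => exact ⟨1, by simp⟩
  | of j =>
    refine ⟨X N j ^ k, ?_, ?_⟩
    · rw [FreeGroup.lift_apply_of, A_X R T hm j (by omega), zpow_neg]
    · rw [map_zpow, pr_ne (by omega)]
      simp [th]
  | inv_of j ih =>
    obtain ⟨W, h1, h2⟩ := ih
    have hu : (FreeGroup.lift (fun j : Fin (m + 1) => A s m j) (FreeGroup.of j)) ∈ U s m := ⟨_, rfl⟩
    rw [map_inv]
    generalize (FreeGroup.lift (fun j : Fin (m + 1) => A s m j) (FreeGroup.of j)) = u at *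
    refine ⟨Φ u⁻¹ W⁻¹, ?_, ?_⟩
    · have h3 := congrArg (Φ u⁻¹) h1
      rw [inv_app, map_mul, map_mul] at h3
      rw [map_inv (Φ u⁻¹) W] at h3 ⊢
      generalize Φ u⁻¹ W = V at *
      generalize Φ u⁻¹ (X N (m + 1)) = Y at *
      rw [h3]
      group
    · rw [U_pr R T hm (inv_mem hu), map_inv, h2, map_inv]
  | mul x y ihx ihy =>
    obtain ⟨W, h1, h2⟩ := ihx
    obtain ⟨V, h3, h4⟩ := ihy
    have hu : (FreeGroup.lift (fun j : Fin (m + 1) => A s m j) x) ∈ U s m := ⟨_, rfl⟩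
    refine ⟨Φ (FreeGroup.lift (fun j : Fin (m + 1) => A s m j) x) V * W, ?_, ?_⟩
    · rw [map_mul, map_mul, MulAut.mul_apply, h3]
      simp only [map_mul, map_inv]
      rw [h1]; group
    · rw [map_mul, U_pr R T hm hu, h2, h4, map_mul]; group

theorem t_X (T : Act s N k Φ) (hm : m < N) :
    ∀ j ≤ m + 1, Φ (t s m j) (X N j) = X N (m + 1) := by
  refine desc (m + 1) ?_ ?_
  · rw [t_top]; simp
  · intro j hj ih
    rw [t_step _ _ _ (by omega), map_mul, MulAut.mul_apply, ← T.a2 j (by omega), inv_app, ih]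

theorem main (R : Rel s N) (T : Act s N k Φ) (hk : k ≠ 0) :
    ∀ m ≤ N, ∀ g ∈ H s m, Φ g = 1 → g = 1 := by
  intro m
  induction m with
  | zero =>
    intro _ g hg _
    simpa [H] using hg
  | succ m IH =>
    intro hm g hg h1
    have hm' : m < N := hm
    obtain ⟨u, hu, h, hh, j, hj, rfl⟩ := decomp R hm' hg
    obtain ⟨w, rfl⟩ := hu
    set u := FreeGroup.lift (fun j : Fin (m + 1) => A s m j) w with hu
    have huU : u ∈ U s m := ⟨w, rfl⟩
    obtain ⟨W, hW, hW'⟩ := push R T hm' w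
    rw [← hu] at hW
    have e1 : X N j = W * X N (m + 1) * W⁻¹ := by
      have : Φ (u * h * t s m j) (X N j) = X N j := by rw [h1]; rfl
      rw [map_mul, map_mul, MulAut.mul_apply, MulAut.mul_apply, t_X T hm' j hj,
        H_fix T hm'.le hh (by omega), hW] at this
      exact this.symm
    have hjm : j = m + 1 := by
      by_contra hne
      have := congrArg (pr N (m + 1)) e1
      rw [pr_ne hne, map_mul, map_mul, pr_self, map_inv] at this
      exact X_ne_one (by omega) (this.trans (by group))
    subst hjm
    have hw : th N m k w = 1 := by
      rw [← inv_eq_one, ← hW']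
      exact pr_eq_one hm e1.symm
    have hw1 : w = 1 := th_inj hm' hk (by rw [hw, map_one])
    have hu1 : u = 1 := by rw [hu, hw1, map_one]
    rw [hu1, t_top, one_mul, mul_one] at h1 ⊢
    exact IH hm'.le h hh h1

end act
end Wada

theorem wada_type1_faithful (n : ℕ) (hn : 2 ≤ n) (k : ℤ) (hk : k ≠ 0)
    (φ : PresentedGroup (braidRels (n - 1)) →* MulAut (FreeGroup (Fin n)))
    (hφ : ∀ i : Fin (n - 1),
      (φ (PresentedGroup.of i)) (FreeGroup.of (xL n i)) =
          FreeGroup.of (xL n i) ^ k * FreeGroup.of (xR n i) * FreeGroup.of (xL n i) ^ (-k) ∧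
      (φ (PresentedGroup.of i)) (FreeGroup.of (xR n i)) = FreeGroup.of (xL n i) ∧
      ∀ j : Fin n, j ≠ xL n i → j ≠ xR n i →
        (φ (PresentedGroup.of i)) (FreeGroup.of j) = FreeGroup.of j) :
    Function.Injective φ := by
  obtain ⟨N, rfl⟩ : ∃ N, n = N + 1 := ⟨n - 1, by omega⟩
  change PresentedGroup (braidRels N) →* MulAut (FreeGroup (Fin (N + 1))) at φ
  change ∀ i : Fin N, _ at hφ
  let s : ℕ → PresentedGroup (braidRels N) := fun i =>
    if h : i < N then PresentedGroup.of ⟨i, h⟩ else 1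
  have hs : ∀ i (h : i < N), s i = PresentedGroup.of ⟨i, h⟩ := fun i h => dif_pos h
  have R : Wada.Rel s N := by
    constructor
    · intro i j hij
      by_cases hj : j < N
      · rw [hs i (by omega), hs j hj]
        have : PresentedGroup.mk (braidRels N) _ = 1 :=
          PresentedGroup.one_of_mem (Or.inl ⟨⟨i, by omega⟩, ⟨j, hj⟩, hij, rfl⟩)
        simp only [map_mul, map_inv] at this
        exact mul_inv_eq_iff_eq_mul.mp (mul_inv_eq_one.mp this)
      · have : s j = 1 := dif_neg hj
        rw [this]; exact Commute.one_right _
    · intro i hi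
      rw [hs i (by omega), hs (i + 1) hi]
      have : PresentedGroup.mk (braidRels N) _ = 1 :=
        PresentedGroup.one_of_mem (Or.inr ⟨⟨i, by omega⟩, ⟨i + 1, hi⟩, rfl, rfl⟩)
      simp only [map_mul, map_inv] at this
      exact mul_inv_eq_one.mp this
  have hX : ∀ j (h : j < N + 1), Wada.X N j = FreeGroup.of ⟨j, h⟩ := fun j h => dif_pos h
  have T : Wada.Act s N k φ := by
    constructor
    · intro i hi
      rw [hs i hi, hX i (by omega), hX (i + 1) (by omega)]
      exact (hφ ⟨i, hi⟩).1
    · intro i hi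
      rw [hs i hi, hX i (by omega), hX (i + 1) (by omega)]
      exact (hφ ⟨i, hi⟩).2.1
    · intro i hi j h1 h2
      by_cases hj : j < N + 1
      · rw [hs i hi, hX j hj]
        refine (hφ ⟨i, hi⟩).2.2 ⟨j, hj⟩ ?_ ?_
        · intro e; exact h1 (congrArg Fin.val e)
        · intro e; exact h2 (congrArg Fin.val e)
      · have : Wada.X N j = 1 := dif_neg hj
        rw [this, map_one]
  rw [injective_iff_map_eq_one]
  intro g hg
  refine Wada.main R T hk N le_rfl g ?_ hg
  have : Wada.H s N = ⊤ := by
    rw [eq_top_iff, ← PresentedGroup.closure_range_of, Wada.H]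
    apply Subgroup.closure_mono
    rintro _ ⟨i, rfl⟩
    exact ⟨i, i.2, (hs i i.2).symm⟩
  rw [this]; trivial
end

section
/- For every n ≥ 2, Wada's representation of type (2) is faithful: the group homomorphism ψ : B_n → Aut(F_n) determined by sending each generator σ_i to the automorphism σ̂_i that maps x_i to x_i x_{i+1}^{−1} x_i, maps x_{i+1} to x_i, and fixes all other free generators, is injective. -/
namespace Wada

/-! ### The free product of countably many copies of `ℤ/2` -/

/-- Relators `b_i ^ 2`. -/
def orel : Set (FreeGroup ℕ) := Set.range fun i : ℕ => FreeGroup.of i * FreeGroup.of i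

/-- The free product of copies of `ℤ/2` indexed by `ℕ`. -/
abbrev O := PresentedGroup orel

/-- The standard involutions. -/
def b (i : ℕ) : O := PresentedGroup.of i

theorem b_sq (i : ℕ) : b i * b i = 1 := by
  have h := PresentedGroup.one_of_mem (rels := orel) (x := FreeGroup.of i * FreeGroup.of i) ⟨i, rfl⟩
  rw [map_mul] at h
  exact h

theorem b_sq_assoc (i : ℕ) (x : O) : b i * (b i * x) = x := by
  rw [← mul_assoc, b_sq, one_mul]

theorem b_inv (i : ℕ) : (b i)⁻¹ = b i := inv_eq_of_mul_eq_one_left (b_sq i)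

/-- Universal property. -/
def olift {H : Type*} [Group H] (f : ℕ → H) (hf : ∀ i, f i * f i = 1) : O →* H :=
  PresentedGroup.toGroup (f := f) (rels := orel) (by
    rintro _ ⟨i, rfl⟩
    simp [hf])

theorem olift_b {H : Type*} [Group H] (f : ℕ → H) (hf : ∀ i, f i * f i = 1) (i : ℕ) :
    olift f hf (b i) = f i := PresentedGroup.toGroup.of _

theorem o_hom_ext {H : Type*} [Group H] {f g : O →* H} (h : ∀ i, f (b i) = g (b i)) : f = g :=
  PresentedGroup.ext h

theorem o_aut_ext {f g : MulAut O} (h : ∀ i, f (b i) = g (b i)) : f = g := by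
  have : f.toMonoidHom = g.toMonoidHom := o_hom_ext h
  ext x
  exact DFunLike.congr_fun this x

/-- Left multiplication by a letter on words. -/
def tl (i : ℕ) : List ℕ → List ℕ
  | [] => [i]
  | a :: l => if a = i then l else i :: a :: l

/-- Reduced words. -/
abbrev RW := {l : List ℕ // l.IsChain (· ≠ ·)}

theorem tl_chain (i : ℕ) (l : List ℕ) (h : l.IsChain (· ≠ ·)) : (tl i l).IsChain (· ≠ ·) := by
  cases l with
  | nil => simp [tl]
  | cons a l =>
    simp only [tl]
    split_ifs with hc
    · exact h.tail
    · exact List.isChain_cons_cons.2 ⟨fun e => hc e.symm, h⟩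

theorem tl_tl (i : ℕ) (l : List ℕ) (h : l.IsChain (· ≠ ·)) : tl i (tl i l) = l := by
  cases l with
  | nil => simp [tl]
  | cons a l =>
    by_cases hc : a = i
    · subst hc
      cases l with
      | nil => simp [tl]
      | cons c l =>
        have : a ≠ c := (List.isChain_cons_cons.1 h).1
        simp [tl, this.symm]
    · simp [tl, hc]

/-- The permutation of reduced words attached to a letter. -/
def tau (i : ℕ) : Equiv.Perm RW :=
  Function.Involutive.toPerm (fun l => ⟨tl i l.1, tl_chain i l.1 l.2⟩)
    (fun l => Subtype.ext (tl_tl i l.1 l.2))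

/-- The action of `O` on reduced words. -/
def nf : O →* Equiv.Perm RW := olift tau (by
  intro i
  ext1 l
  exact Subtype.ext (tl_tl i l.1 l.2))

/-- `Q k g`: `g` has a reduced expression which starts with `b k`. -/
inductive Q : ℕ → O → Prop
  | one (k : ℕ) : Q k (b k)
  | cons (k l : ℕ) (g : O) : k ≠ l → Q l g → Q k (b k * g)

theorem Q.head {k : ℕ} {g : O} (h : Q k g) : ∃ t, (nf g ⟨[], by simp⟩).1 = k :: t := by
  induction h with
  | one k =>
    refine ⟨[], ?_⟩
    rw [nf, olift_b]
    rfl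
  | cons k l g hkl _ ih =>
    obtain ⟨t, ht⟩ := ih
    refine ⟨l :: t, ?_⟩
    rw [map_mul, Equiv.Perm.mul_apply]
    have : ∀ x : RW, (nf (b k) x).1 = tl k x.1 := by
      intro x
      rw [nf, olift_b]
      rfl
    rw [this, ht]
    simp [tl, hkl.symm]

theorem Q.ne_one {k : ℕ} {g : O} (h : Q k g) : g ≠ 1 := by
  rintro rfl
  obtain ⟨t, ht⟩ := h.head
  simp at ht

theorem Q.uniq {k l : ℕ} {g : O} (h : Q k g) (h' : Q l g) : k = l := by
  obtain ⟨t, ht⟩ := h.head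
  obtain ⟨t', ht'⟩ := h'.head
  rw [ht] at ht'
  exact (List.cons.inj ht').1

theorem Q.mul_right {k : ℕ} {g : O} (h : Q k g) (c : ℕ) :
    Q k (g * b c) ∨ (g = b c ∧ k = c) := by
  induction h with
  | one k =>
    by_cases hk : k = c
    · right; exact ⟨by rw [hk], hk⟩
    · left; exact Q.cons k c _ hk (Q.one c)
  | cons k l g hkl hg ih =>
    left
    rcases ih with ih | ⟨rfl, rfl⟩
    · rw [mul_assoc]; exact Q.cons k l _ hkl ih
    · rw [mul_assoc, b_sq, mul_one]; exact Q.one k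

theorem Q.not_comm {k : ℕ} {h : O} (hq : Q k h) (c : ℕ) (hkc : k ≠ c) :
    h⁻¹ * b c * h ≠ b c := by
  intro e
  have e2 : b c * h = h * b c := by
    calc b c * h = h * (h⁻¹ * b c * h) := by group
      _ = h * b c := by rw [e]
  rcases hq.mul_right c with h1 | ⟨_, h2⟩
  · rw [← e2] at h1
    exact hkc (Q.uniq h1 (Q.cons c k h hkc.symm hq))
  · exact hkc h2

/-! ### Words relative to a dihedral subgroup -/

/-- Nonempty alternating words in the letters `m`, `j`. -/
inductive DW (m j : ℕ) : ℕ → O → Prop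
  | one (x : ℕ) : (x = m ∨ x = j) → DW m j x (b x)
  | cons (x y : ℕ) (d : O) : (x = m ∨ x = j) → x ≠ y → DW m j y d → DW m j x (b x * d)

/-- The dihedral subgroup. -/
def D (m j : ℕ) : Subgroup O := Subgroup.closure {b m, b j}

theorem b_mem_D {m j x : ℕ} (h : x = m ∨ x = j) : b x ∈ D m j := by
  apply Subgroup.subset_closure
  rcases h with rfl | rfl <;> simp

theorem DW.letter {m j x : ℕ} {d : O} (h : DW m j x d) : x = m ∨ x = j := by
  cases h <;> assumption

theorem DW.mem {m j x : ℕ} {d : O} (h : DW m j x d) : d ∈ D m j := by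
  induction h with
  | one x hx => exact b_mem_D hx
  | cons x y d hx _ _ ih => exact mul_mem (b_mem_D hx) ih

theorem DW.q {m j x : ℕ} {d : O} (h : DW m j x d) : Q x d := by
  induction h with
  | one x hx => exact Q.one x
  | cons x y d hx hxy _ ih => exact Q.cons x y d hxy ih

theorem DW.q_mul {m j x : ℕ} {d : O} (h : DW m j x d) {l : ℕ} {q : O} (hm : l ≠ m) (hj : l ≠ j)
    (hq : Q l q) : Q x (d * q) := by
  induction h with
  | one x hx => exact Q.cons x l q (by rintro rfl; tauto) hq
  | cons x y d hx hxy _ ih => rw [mul_assoc]; exact Q.cons x y _ hxy ih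

theorem D_cases {m j : ℕ} {d : O} (h : d ∈ D m j) : d = 1 ∨ ∃ x, DW m j x d := by
  have key : ∀ x, (x = m ∨ x = j) → ∀ d, (d = 1 ∨ ∃ y, DW m j y d) →
      (b x * d = 1 ∨ ∃ y, DW m j y (b x * d)) := by
    intro x hx d hd
    rcases hd with rfl | ⟨y, hy⟩
    · right; rw [mul_one]; exact ⟨x, DW.one x hx⟩
    · by_cases hxy : x = y
      · subst hxy
        cases hy with
        | one _ _ => left; exact b_sq x
        | cons _ y d _ _ h => right; rw [b_sq_assoc]; exact ⟨y, h⟩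
      · right; exact ⟨x, DW.cons x y d hx hxy hy⟩
  have key2 : ∀ g ∈ ({b m, b j} : Set O), ∃ x, (x = m ∨ x = j) ∧ g = b x := by
    rintro g (rfl | rfl)
    · exact ⟨m, Or.inl rfl, rfl⟩
    · exact ⟨j, Or.inr rfl, rfl⟩
  unfold D at h
  induction h using Subgroup.closure_induction_left with
  | one => left; rfl
  | mul_left x hx y _ ih =>
    obtain ⟨z, hz, rfl⟩ := key2 x hx
    exact key z hz _ ih
  | inv_mul_cancel x hx y _ ih =>
    obtain ⟨z, hz, rfl⟩ := key2 x hx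
    rw [b_inv]
    exact key z hz _ ih

/-- `QD m j k q`: `q` is a reduced alternating product of letters outside `{m, j}` and elements of
the dihedral group on `m, j`, starting with the outside letter `k`. -/
inductive QD (m j : ℕ) : ℕ → O → Prop
  | base (k : ℕ) (d : O) : k ≠ m → k ≠ j → d ∈ D m j → QD m j k (b k * d)
  | cons (k l : ℕ) (d q : O) : k ≠ m → k ≠ j → d ∈ D m j → (d ≠ 1 ∨ k ≠ l) → QD m j l q →
      QD m j k (b k * (d * q))

theorem QD.letter {m j k : ℕ} {q : O} (h : QD m j k q) : k ≠ m ∧ k ≠ j := by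
  cases h <;> exact ⟨by assumption, by assumption⟩

theorem QD.q {m j k : ℕ} {q : O} (h : QD m j k q) : Q k q := by
  induction h with
  | base k d hm hj hd =>
    rcases D_cases hd with rfl | ⟨x, hx⟩
    · rw [mul_one]; exact Q.one k
    · exact Q.cons k x d (by rintro rfl; have := hx.letter; tauto) hx.q
  | cons k l d q hm hj hd hdk hq ih =>
    rcases D_cases hd with rfl | ⟨x, hx⟩
    · rw [one_mul]; exact Q.cons k l q (by tauto) ih
    · exact Q.cons k x _ (by rintro rfl; have := hx.letter; tauto)
        (hx.q_mul hq.letter.1 hq.letter.2 ih)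

theorem Q.qd_aux {m j k : ℕ} {g : O} (h : Q k g) :
    ((k ≠ m ∧ k ≠ j) ∧ QD m j k g) ∨
    ((k = m ∨ k = j) ∧ (DW m j k g ∨ ∃ d l q, DW m j k d ∧ QD m j l q ∧ g = d * q)) := by
  induction h with
  | one k =>
    by_cases hk : k = m ∨ k = j
    · right; exact ⟨hk, Or.inl (DW.one k hk)⟩
    · push Not at hk
      left
      refine ⟨hk, ?_⟩
      have := QD.base (m := m) (j := j) k 1 hk.1 hk.2 (one_mem _)
      rwa [mul_one] at this
  | cons k l g hkl hg ih =>
    by_cases hk : k = m ∨ k = j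
    · right
      refine ⟨hk, ?_⟩
      rcases ih with ⟨_, h2⟩ | ⟨_, h2 | ⟨d, l', q, h3, h4, rfl⟩⟩
      · right; exact ⟨b k, l, g, DW.one k hk, h2, rfl⟩
      · left; exact DW.cons k l g hk hkl h2
      · right; exact ⟨b k * d, l', q, DW.cons k l d hk hkl h3, h4, by rw [mul_assoc]⟩
    · push Not at hk
      left
      refine ⟨hk, ?_⟩
      rcases ih with ⟨_, h2⟩ | ⟨_, h2 | ⟨d, l', q, h3, h4, rfl⟩⟩
      · have := QD.cons k l 1 g hk.1 hk.2 (one_mem _) (Or.inr hkl) h2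
        rwa [one_mul] at this
      · exact QD.base k g hk.1 hk.2 h2.mem
      · exact QD.cons k l' d q hk.1 hk.2 h3.mem (Or.inl h3.q.ne_one) h4

theorem Q.qd {m j k : ℕ} {g : O} (h : Q k g) (hm : k ≠ m) (hj : k ≠ j) : QD m j k g := by
  rcases h.qd_aux (m := m) (j := j) with ⟨_, h⟩ | ⟨h, _⟩
  · exact h
  · tauto

/-- `f` acts on letters by conjugation with powers of `z`. -/
structure IsPush (m j : ℕ) (w : ℕ → ℤ) (f : MulAut O) (z : O) : Prop where
  mem : z ∈ D m j
  fz : f z = z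
  hm : f (b m) = z * b m * z⁻¹
  hj : f (b j) = z * b j * z⁻¹
  hk : ∀ k, k ≠ m → k ≠ j → f (b k) = z ^ w k * b k * (z ^ w k)⁻¹

theorem IsPush.inv {m j : ℕ} {w : ℕ → ℤ} {f : MulAut O} {z : O} (h : IsPush m j w f z) :
    IsPush m j w f⁻¹ z⁻¹ := by
  have key : ∀ x y, f x = y → f⁻¹ y = x := by
    rintro x y rfl; simp
  refine ⟨inv_mem h.mem, key _ _ (by rw [map_inv, h.fz]), key _ _ ?_, key _ _ ?_, ?_⟩
  · rw [inv_inv, map_mul, map_mul, map_inv, h.fz, h.hm]; group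
  · rw [inv_inv, map_mul, map_mul, map_inv, h.fz, h.hj]; group
  · intro k h1 h2
    apply key
    rw [map_mul, map_mul, map_inv, map_zpow, map_inv, h.fz, h.hk k h1 h2]; group

theorem IsPush.map_D {m j : ℕ} {w : ℕ → ℤ} {f : MulAut O} {z : O} (h : IsPush m j w f z)
    {d : O} (hd : d ∈ D m j) : f d = z * d * z⁻¹ := by
  unfold D at hd
  induction hd using Subgroup.closure_induction with
  | mem x hx =>
    rcases hx with rfl | rfl
    · exact h.hm
    · exact h.hj
  | one => simp
  | mul x y _ _ hx hy => rw [map_mul, hx, hy]; group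
  | inv x _ hx => rw [map_inv, hx]; group

theorem IsPush.skeleton {m j : ℕ} {w : ℕ → ℤ} {f : MulAut O} {z : O} (h : IsPush m j w f z)
    {k : ℕ} {q : O} (hq : QD m j k q) : ∃ q', QD m j k q' ∧ f q = z ^ w k * q' := by
  induction hq with
  | base k d hm hj hd =>
    refine ⟨b k * ((z ^ w k)⁻¹ * (z * d * z⁻¹)), QD.base k _ hm hj ?_, ?_⟩
    · exact mul_mem (inv_mem (zpow_mem h.mem _)) (mul_mem (mul_mem h.mem hd) (inv_mem h.mem))
    · rw [map_mul, h.hk k hm hj, h.map_D hd]; group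
  | cons k l d q hm hj hd hdk _ ih =>
    obtain ⟨q', hq', e⟩ := ih
    refine ⟨b k * (((z ^ w k)⁻¹ * (z * d * z⁻¹) * z ^ w l) * q'), QD.cons k l _ _ hm hj ?_ ?_ hq', ?_⟩
    · exact mul_mem (mul_mem (inv_mem (zpow_mem h.mem _))
        (mul_mem (mul_mem h.mem hd) (inv_mem h.mem))) (zpow_mem h.mem _)
    · by_cases hkl : k = l
      · subst hkl
        left
        intro e
        rcases hdk with hdk | hdk
        · apply hdk
          have e2 : d = z⁻¹ * (z ^ w k) * ((z ^ w k)⁻¹ * (z * d * z⁻¹) * z ^ w k) * (z ^ w k)⁻¹ * z := by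
            group
          rw [e2, e]; group
        · exact hdk rfl
      · exact Or.inr hkl
    · rw [map_mul, map_mul, h.hk k hm hj, h.map_D hd, e]; group

theorem DW_pow {m j x y : ℕ} (hx : x = m ∨ x = j) (hy : y = m ∨ y = j) (hxy : x ≠ y) (n : ℕ) :
    DW m j x ((b x * b y) ^ (n + 1)) := by
  induction n with
  | zero => rw [zero_add, pow_one]; exact DW.cons x y _ hx hxy (DW.one y hy)
  | succ n ih =>
    rw [pow_succ', mul_assoc]
    exact DW.cons x y _ hx hxy (DW.cons y x _ hy hxy.symm ih)

theorem zpow_cases {m j : ℕ} (hjm : j ≠ m) (e : ℤ) (he : e ≠ 0) :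
    DW m j j ((b j * b m) ^ e) ∨ DW m j j (b m * (b j * b m) ^ e) := by
  obtain ⟨n, rfl | rfl⟩ := e.eq_nat_or_neg
  · obtain ⟨k, rfl⟩ := Nat.exists_eq_succ_of_ne_zero (n := n) (by rintro rfl; simp at he)
    left
    rw [zpow_natCast]
    exact DW_pow (Or.inr rfl) (Or.inl rfl) hjm k
  · obtain ⟨k, rfl⟩ := Nat.exists_eq_succ_of_ne_zero (n := n) (by rintro rfl; simp at he)
    right
    rw [zpow_neg, zpow_natCast, ← inv_pow, mul_inv_rev, b_inv, b_inv, Nat.succ_eq_add_one,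
      pow_succ', mul_assoc, b_sq_assoc]
    cases k with
    | zero => rw [pow_zero, mul_one]; exact DW.one j (Or.inr rfl)
    | succ k => exact DW.cons j m _ (Or.inr rfl) hjm (DW_pow (Or.inl rfl) (Or.inr rfl) hjm.symm k)

/-- Weights. -/
def wt (m j k : ℕ) : ℤ := if j < k ∧ k < m then 2 else 0

theorem wt_sub_one (m j k : ℕ) : wt m j k - 1 = 1 ∨ wt m j k - 1 = -1 := by
  unfold wt; split_ifs <;> simp

/-- The twisting element with sign. -/
def zz (m j : ℕ) (s : Bool) : O := if s then b j * b m else (b j * b m)⁻¹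

/-- The invariant of the ping-pong argument. -/
def State (m j : ℕ) (s : Bool) (h : O) : Prop :=
  ∃ N : ℕ, 0 < N ∧ (h = zz m j s ^ (-(N : ℤ)) ∨
    ∃ k q, QD m j k q ∧ h = zz m j s ^ ((wt m j k - 1) * N) * q)

theorem zz_cases {m j : ℕ} (hjm : j ≠ m) (s : Bool) (e : ℤ) (he : e ≠ 0) :
    DW m j j (zz m j s ^ e) ∨ DW m j j (b m * zz m j s ^ e) := by
  cases s
  · have := zpow_cases hjm (-e) (by omega)
    rw [zpow_neg, ← inv_zpow] at this
    exact this
  · simpa [zz] using zpow_cases hjm e he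

theorem State.q {m j : ℕ} (hjm : j ≠ m) {s : Bool} {h : O} (hs : State m j s h) :
    Q j h ∨ Q j (b m * h) := by
  obtain ⟨N, hN, rfl | ⟨k, q, hq, rfl⟩⟩ := hs
  · rcases zz_cases hjm s (-(N : ℤ)) (by omega) with h | h
    · exact Or.inl h.q
    · exact Or.inr h.q
  · have he : (wt m j k - 1) * (N : ℤ) ≠ 0 := by
      rcases wt_sub_one m j k with e | e <;> rw [e] <;> omega
    rcases zz_cases hjm s _ he with h | h
    · exact Or.inl (h.q_mul hq.letter.1 hq.letter.2 hq.q)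
    · right; rw [← mul_assoc]; exact h.q_mul hq.letter.1 hq.letter.2 hq.q

theorem State.same {m j : ℕ} {s : Bool} {h : O} (hs : State m j s h) {f : MulAut O}
    (hf : IsPush m j (wt m j) f (zz m j s)) : State m j s ((zz m j s)⁻¹ * f h) := by
  obtain ⟨N, hN, rfl | ⟨k, q, hq, rfl⟩⟩ := hs
  · refine ⟨N + 1, by omega, Or.inl ?_⟩
    rw [map_zpow, hf.fz]; push_cast; group
  · obtain ⟨q', hq', e⟩ := hf.skeleton hq
    refine ⟨N + 1, by omega, Or.inr ⟨k, q', hq', ?_⟩⟩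
    rw [map_mul, map_zpow, hf.fz, e, ← mul_assoc, ← mul_assoc, ← zpow_neg_one, ← zpow_add,
      ← zpow_add]
    congr 2
    push_cast
    ring

theorem State.new {m i j : ℕ} {s : Bool} {h : O} (hq : Q j h) (hjm : j ≠ m) (hij : j ≠ i)
    {f : MulAut O} (hf : IsPush m i (wt m i) f (zz m i s)) :
    State m i s ((zz m i s)⁻¹ * f h) := by
  obtain ⟨q', hq', e⟩ := hf.skeleton (hq.qd hjm hij)
  refine ⟨1, by omega, Or.inr ⟨j, q', hq', ?_⟩⟩
  rw [e, ← mul_assoc, ← zpow_neg_one, ← zpow_add]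
  congr 2
  push_cast
  ring

theorem pingpong (m : ℕ) (a : Fin m → MulAut O)
    (ha : ∀ j : Fin m, IsPush m j (wt m j) (a j) (b j * b m)) (L : List (Fin m × Bool))
    (p : Fin m × Bool) (hL : FreeGroup.IsReduced (p :: L)) :
    ∃ h, State m p.1 p.2 h ∧
      FreeGroup.lift a (FreeGroup.mk (p :: L)) (b m) = h⁻¹ * b m * h := by
  have hp : ∀ p : Fin m × Bool, IsPush m p.1 (wt m p.1) (FreeGroup.lift a (FreeGroup.mk [p]))
      (zz m p.1 p.2) := by
    rintro ⟨j, s⟩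
    cases s
    · simpa [zz] using (ha j).inv
    · simpa [zz] using ha j
  induction L generalizing p with
  | nil =>
    refine ⟨(zz m p.1 p.2)⁻¹, ⟨1, by omega, Or.inl (by simp)⟩, ?_⟩
    rw [(hp p).hm]; group
  | cons p' L ih =>
    rw [FreeGroup.isReduced_cons_cons] at hL
    obtain ⟨h, hs, e⟩ := ih p' hL.2
    have split : FreeGroup.lift a (FreeGroup.mk (p :: p' :: L)) =
        FreeGroup.lift a (FreeGroup.mk [p]) * FreeGroup.lift a (FreeGroup.mk (p' :: L)) := by
      rw [← map_mul, FreeGroup.mul_mk]; rfl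
    have step : ∀ h0, h⁻¹ * b m * h = h0⁻¹ * b m * h0 →
        FreeGroup.lift a (FreeGroup.mk (p :: p' :: L)) (b m) =
        ((zz m p.1 p.2)⁻¹ * FreeGroup.lift a (FreeGroup.mk [p]) h0)⁻¹ * b m *
          ((zz m p.1 p.2)⁻¹ * FreeGroup.lift a (FreeGroup.mk [p]) h0) := by
      intro h0 e0
      rw [split, MulAut.mul_apply, e, e0, map_mul, map_mul, map_inv, (hp p).hm]; group
    have hm' : (p'.1 : ℕ) ≠ m := p'.1.2.ne
    by_cases hpp : p.1 = p'.1
    · have : p = p' := Prod.ext hpp (hL.1 hpp)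
      subst this
      exact ⟨_, hs.same (hp p), step h rfl⟩
    · have hne : (p'.1 : ℕ) ≠ p.1 := fun h => hpp (Fin.ext h.symm)
      rcases hs.q hm' with hq | hq
      · exact ⟨_, State.new hq hm' hne (hp p), step h rfl⟩
      · refine ⟨_, State.new hq hm' hne (hp p), step _ ?_⟩
        rw [mul_inv_rev, b_inv]
        simp only [mul_assoc, b_sq_assoc]

theorem push_faithful (m : ℕ) (a : Fin m → MulAut O)
    (ha : ∀ j : Fin m, IsPush m j (wt m j) (a j) (b j * b m)) (x : FreeGroup (Fin m))
    (hx : FreeGroup.lift a x = 1) : x = 1 := by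
  have hr : FreeGroup.IsReduced x.toWord := FreeGroup.isReduced_toWord
  have hw : FreeGroup.mk x.toWord = x := FreeGroup.mk_toWord
  cases hL : x.toWord with
  | nil => exact FreeGroup.toWord_eq_nil_iff.1 hL
  | cons p L =>
    exfalso
    rw [hL] at hr hw
    obtain ⟨h, hs, e⟩ := pingpong m a ha L p hr
    rw [hw, hx, MulAut.one_apply] at e
    have hm' : (p.1 : ℕ) ≠ m := p.1.2.ne
    rcases hs.q hm' with hq | hq
    · exact hq.not_comm m hm' e.symm
    · apply hq.not_comm m hm'
      rw [mul_inv_rev, b_inv]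
      simp only [mul_assoc, b_sq_assoc]
      rw [← mul_assoc]
      exact e.symm



/-! ### The braid automorphisms of `O` -/

/-- Images of generators under `σ_i`. -/
def sfun (i k : ℕ) : O := if k = i then b i * b (i + 1) * b i else if k = i + 1 then b i else b k

/-- Images of generators under `σ_i⁻¹`. -/
def sfun' (i k : ℕ) : O :=
  if k = i then b (i + 1) else if k = i + 1 then b (i + 1) * b i * b (i + 1) else b k

theorem sfun_sq (i k : ℕ) : sfun i k * sfun i k = 1 := by
  unfold sfun
  split_ifs <;> simp only [mul_assoc, b_sq_assoc, b_sq]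

theorem sfun'_sq (i k : ℕ) : sfun' i k * sfun' i k = 1 := by
  unfold sfun'
  split_ifs <;> simp only [mul_assoc, b_sq_assoc, b_sq]

/-- The automorphism `σ_i` of `O`. -/
def sO (i : ℕ) : MulAut O :=
  MonoidHom.toMulEquiv (olift (sfun i) (sfun_sq i)) (olift (sfun' i) (sfun'_sq i))
    (by
      apply o_hom_ext
      intro k
      simp only [MonoidHom.comp_apply, MonoidHom.id_apply, olift_b]
      by_cases h1 : k = i
      · subst h1
        simp only [sfun, if_true, map_mul, olift_b, sfun', Nat.succ_ne_self, if_false, mul_assoc,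
          b_sq_assoc, b_sq, mul_one]
      · by_cases h2 : k = i + 1
        · subst h2
          simp [sfun, sfun', olift_b]
        · simp [sfun, sfun', olift_b, h1, h2])
    (by
      apply o_hom_ext
      intro k
      simp only [MonoidHom.comp_apply, MonoidHom.id_apply, olift_b]
      by_cases h1 : k = i
      · subst h1
        simp [sfun, sfun', olift_b]
      · by_cases h2 : k = i + 1
        · subst h2
          simp only [sfun, if_true, map_mul, olift_b, sfun', Nat.succ_ne_self, if_false, mul_assoc,
            b_sq_assoc, b_sq, mul_one]
        · simp [sfun, sfun', olift_b, h1, h2])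

theorem sO_b (i k : ℕ) : sO i (b k) = sfun i k :=
  olift_b (sfun i) (sfun_sq i) k

theorem sO_self (i : ℕ) : sO i (b i) = b i * b (i + 1) * b i := by simp [sO_b, sfun]

theorem sO_succ (i : ℕ) : sO i (b (i + 1)) = b i := by simp [sO_b, sfun]

theorem sO_other (i k : ℕ) (h1 : k ≠ i) (h2 : k ≠ i + 1) : sO i (b k) = b k := by
  simp [sO_b, sfun, h1, h2]

theorem sO_comm (i j : ℕ) (h : i + 1 < j) : sO i * sO j = sO j * sO i := by
  apply o_aut_ext
  intro k
  simp only [MulAut.mul_apply]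
  have a1 := sO_other j i (by omega) (by omega)
  have a2 := sO_other j (i + 1) (by omega) (by omega)
  have a3 := sO_other i j (by omega) (by omega)
  have a4 := sO_other i (j + 1) (by omega) (by omega)
  by_cases k1 : k = i
  · subst k1; simp only [sO_self, a1, a2, map_mul]
  by_cases k2 : k = i + 1
  · subst k2; simp only [sO_succ, a1, a2]
  by_cases k3 : k = j
  · subst k3; simp only [sO_self, a3, a4, map_mul]
  by_cases k4 : k = j + 1
  · subst k4; simp only [sO_succ, a3, a4]
  rw [sO_other j k k3 k4, sO_other i k k1 k2, sO_other j k k3 k4]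

theorem sO_braid (i : ℕ) : sO i * sO (i + 1) * sO i = sO (i + 1) * sO i * sO (i + 1) := by
  apply o_aut_ext
  intro k
  simp only [MulAut.mul_apply]
  have a1 := sO_other (i + 1) i (by omega) (by omega)
  have a2 := sO_other i (i + 1 + 1) (by omega) (by omega)
  by_cases k1 : k = i
  · subst k1
    simp only [sO_self, sO_succ, a1, a2, map_mul, mul_assoc, b_sq_assoc, b_sq, mul_one]
  by_cases k2 : k = i + 1
  · subst k2
    simp only [sO_self, sO_succ, a1, a2, map_mul, mul_assoc, b_sq_assoc, b_sq, mul_one]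
  by_cases k3 : k = i + 1 + 1
  · subst k3; simp only [sO_succ, a1, a2]
  rw [sO_other (i + 1) k k2 k3, sO_other i k k1 k2, sO_other (i + 1) k k2 k3, sO_other i k k1 k2]

/-! ### Combing -/

/-- A system of braid generators in a group. -/
structure BraidSys (G : Type*) [Group G] (N : ℕ) (s : ℕ → G) : Prop where
  comm : ∀ i j, i + 1 < j → j < N → s i * s j = s j * s i
  braid : ∀ i, i + 1 < N → s i * s (i + 1) * s i = s (i + 1) * s i * s (i + 1)

section Comb

variable {G : Type*} [Group G] (s : ℕ → G)

/-- `s l * s (l+1) * ... * s (m-1)`. -/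
def CC (m l : ℕ) : G := ((List.range' l (m - l)).map s).prod

/-- The pure braid generators. -/
def AA (m j : ℕ) : G := (CC s m (j + 1))⁻¹ * s j * CC s m j

/-- Subgroup generated by the first `m - 1` generators. -/
def HH (m : ℕ) : Subgroup G := Subgroup.closure {x | ∃ i, i + 1 < m ∧ x = s i}

/-- Subgroup generated by pure braid generators. -/
def UU (m : ℕ) : Subgroup G := Subgroup.closure {x | ∃ j, j < m ∧ x = AA s m j}

theorem CC_self (m : ℕ) : CC s m m = 1 := by simp [CC]

theorem CC_step {m l : ℕ} (h : l < m) : CC s m l = s l * CC s m (l + 1) := by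
  unfold CC
  obtain ⟨d, rfl⟩ : ∃ d, m = l + (d + 1) := ⟨m - l - 1, by omega⟩
  have e1 : l + (d + 1) - l = d + 1 := by omega
  have e2 : l + (d + 1) - (l + 1) = d := by omega
  rw [e1, e2, List.range'_succ, List.map_cons, List.prod_cons]

theorem AA_last (m : ℕ) : AA s (m + 1) m = s m * s m := by
  rw [AA, CC_self, CC_step s (Nat.lt_succ_self m), CC_self]; simp

variable {s} {N : ℕ}

theorem CC_comm (hs : BraidSys G N s) {m i l : ℕ} (hm : m ≤ N) (h : i + 1 < l) : Commute (s i) (CC s m l) := by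
  apply Commute.list_prod_right
  intro x hx
  obtain ⟨j, hj, rfl⟩ := List.mem_map.1 hx
  rw [List.mem_range'_1] at hj
  exact hs.comm i j (by omega) (by omega)

theorem CC_shift (hs : BraidSys G N s) {m i l : ℕ} (hm : m ≤ N) (hl : l ≤ i) (h : i + 1 < m) :
    s (i + 1) * CC s m l = CC s m l * s i := by
  obtain ⟨d, rfl⟩ := Nat.exists_eq_add_of_le hl
  clear hl
  induction d generalizing l with
  | zero =>
    have c := CC_comm hs (l := l + 2) (i := l) hm (by omega)
    rw [CC_step s (show l < m by omega), CC_step s (show l + 1 < m by omega)]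
    have := hs.braid l (by omega)
    simp only [add_zero]
    rw [mul_assoc (s l), mul_assoc (s (l + 1)), ← c.eq, ← mul_assoc, ← mul_assoc, ← mul_assoc,
      ← mul_assoc, this]
  | succ d ih =>
    rw [CC_step s (show l < m by omega)]
    have e := ih (l := l + 1) (by omega)
    have e2 : l + 1 + d = l + (d + 1) := by omega
    rw [e2] at e
    rw [mul_assoc, ← e, ← mul_assoc, ← mul_assoc, hs.comm l _ (by omega) (by omega)]

theorem AA_eq1 {m j : ℕ} (h : j + 1 < m) :
    AA s m j = (CC s m (j + 2))⁻¹ * ((s (j + 1))⁻¹ * s j * s j * s (j + 1)) * CC s m (j + 2) := by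
  rw [AA, CC_step s (show j < m by omega), CC_step s (show j + 1 < m by omega)]
  group

theorem braid_conj (hs : BraidSys G N s) {j : ℕ} (h : j + 1 < N) :
    (s (j + 1))⁻¹ * s j * s j * s (j + 1) = s j * (s (j + 1) * s (j + 1)) * (s j)⁻¹ := by
  have e := hs.braid j h
  have e1 : (s (j + 1))⁻¹ * s j * s (j + 1) = s j * s (j + 1) * (s j)⁻¹ := by
    rw [eq_mul_inv_iff_mul_eq, mul_assoc, mul_assoc, inv_mul_eq_iff_eq_mul]
    simpa only [mul_assoc] using e
  calc _ = ((s (j + 1))⁻¹ * s j * s (j + 1)) * ((s (j + 1))⁻¹ * s j * s (j + 1)) := by group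
    _ = _ := by rw [e1]; group

theorem AA_top {m j : ℕ} (h : j + 1 < m) :
    AA s m (j + 1) = (CC s m (j + 2))⁻¹ * (s (j + 1) * s (j + 1)) * CC s m (j + 2) := by
  rw [AA, CC_step s (show j + 1 < m by omega)]
  group

theorem AA_rec (hs : BraidSys G N s) {m j : ℕ} (hm : m ≤ N) (h : j + 1 < m) :
    AA s m j = s j * AA s m (j + 1) * (s j)⁻¹ := by
  have c := (CC_comm hs (l := j + 2) (i := j) hm (by omega))
  rw [AA_eq1 h, AA_top h, braid_conj hs (by omega)]
  have c1 := c.inv_right.eq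
  have c2 := c.inv_left.eq
  calc _ = ((CC s m (j + 2))⁻¹ * s j) * (s (j + 1) * s (j + 1)) * ((s j)⁻¹ * CC s m (j + 2)) := by
        group
    _ = _ := by rw [← c1, c2]; group

theorem AA_comm (hs : BraidSys G N s) {m i j : ℕ} (hm : m ≤ N) (hj : j < m) (hi : i + 1 < m) (h1 : i ≠ j)
    (h2 : i + 1 ≠ j) : s i * AA s m j * (s i)⁻¹ = AA s m j := by
  rw [mul_inv_eq_iff_eq_mul]
  unfold AA
  rcases lt_or_gt_of_ne h1 with h | h
  · have c1 := CC_comm hs (l := j + 1) (i := i) hm (by omega)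
    have c2 := CC_comm hs (l := j) (i := i) hm (by omega)
    have c3 : Commute (s i) (s j) := hs.comm i j (by omega) (by omega)
    exact ((c1.inv_right.mul_right c3).mul_right c2).eq
  · have c1 := CC_shift hs (l := j + 1) (i := i) hm (by omega) hi
    have c2 := CC_shift hs (l := j) (i := i) hm (by omega) hi
    have c3 := hs.comm j (i + 1) (by omega) (by omega)
    have c1' : s i * (CC s m (j + 1))⁻¹ = (CC s m (j + 1))⁻¹ * s (i + 1) := by
      rw [mul_inv_eq_iff_eq_mul, mul_assoc, c1]; group
    rw [← mul_assoc, ← mul_assoc, c1', mul_assoc _ (s (i + 1)), ← c3, mul_assoc _ _ (s i), ← c2]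
    simp only [mul_assoc]

theorem braid_key (hs : BraidSys G N s) {j : ℕ} (h : j + 1 < N) :
    Commute (s j) (s (j + 1) * s (j + 1) * (s j * (s (j + 1) * s (j + 1)) * (s j)⁻¹)) := by
  have e := hs.braid j h
  generalize s j = x at *
  generalize s (j + 1) = y at *
  have e1 : y * y * (x * (y * y) * x⁻¹) = y * x * x * y := by
    calc y * y * (x * (y * y) * x⁻¹) = y * (y * x * y) * y * x⁻¹ := by group
      _ = y * (x * y * x) * y * x⁻¹ := by rw [e]
      _ = y * x * (y * x * y) * x⁻¹ := by group
      _ = y * x * x * y := by rw [← e]; group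
  rw [e1]
  change x * (y * x * x * y) = y * x * x * y * x
  calc x * (y * x * x * y) = (x * y * x) * x * y := by group
    _ = y * x * (y * x * y) := by rw [e]; group
    _ = _ := by rw [← e]; group

theorem AA_key (hs : BraidSys G N s) {m j : ℕ} (hm : m ≤ N) (h : j + 1 < m) :
    Commute (s j) (AA s m (j + 1) * AA s m j) := by
  have c := (CC_comm hs (l := j + 2) (i := j) hm (by omega))
  have k := braid_key hs (j := j) (by omega)
  have : AA s m (j + 1) * AA s m j = (CC s m (j + 2))⁻¹ *
      (s (j + 1) * s (j + 1) * (s j * (s (j + 1) * s (j + 1)) * (s j)⁻¹)) * CC s m (j + 2) := by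
    rw [AA_eq1 h, AA_top h, braid_conj hs (by omega)]
    group
  rw [this]
  exact (c.inv_right.mul_right k).mul_right c

theorem AA_mem {m j : ℕ} (hj : j < m) : AA s m j ∈ UU s m := Subgroup.subset_closure ⟨j, hj, rfl⟩

theorem conj_gen (hs : BraidSys G N s) {m i j : ℕ} (hm : m ≤ N) (hi : i + 1 < m) (hj : j < m) :
    s i * AA s m j * (s i)⁻¹ ∈ UU s m ∧ (s i)⁻¹ * AA s m j * s i ∈ UU s m := by
  have r := AA_rec hs hm hi
  have k := (AA_key hs hm hi).eq
  have m1 : AA s m i ∈ UU s m := AA_mem (by omega)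
  have m2 : AA s m (i + 1) ∈ UU s m := AA_mem hi
  have r' : (s i)⁻¹ * AA s m i * s i = AA s m (i + 1) := by rw [r]; group
  by_cases h1 : i = j
  · subst h1
    refine ⟨?_, by rw [r']; exact m2⟩
    have : s i * AA s m i * (s i)⁻¹ = (AA s m i)⁻¹ * AA s m (i + 1) * AA s m i := by
      calc s i * AA s m i * (s i)⁻¹
          = (s i * AA s m (i + 1) * (s i)⁻¹)⁻¹ * (s i * (AA s m (i + 1) * AA s m i)) * (s i)⁻¹ := by
            group
        _ = _ := by rw [← r, k]; group
    rw [this]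
    exact mul_mem (mul_mem (inv_mem m1) m2) m1
  by_cases h2 : i + 1 = j
  · subst h2
    refine ⟨by rw [← r]; exact m1, ?_⟩
    have : (s i)⁻¹ * AA s m (i + 1) * s i = AA s m (i + 1) * AA s m i * (AA s m (i + 1))⁻¹ := by
      calc (s i)⁻¹ * AA s m (i + 1) * s i
          = (s i)⁻¹ * ((AA s m (i + 1) * AA s m i) * s i) * ((s i)⁻¹ * AA s m i * s i)⁻¹ := by
            group
        _ = _ := by rw [r', ← k]; group
    rw [this]
    exact mul_mem (mul_mem m2 m1) (inv_mem m2)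
  have c := AA_comm hs hm hj hi h1 h2
  refine ⟨by rw [c]; exact AA_mem hj, ?_⟩
  have : (s i)⁻¹ * AA s m j * s i = AA s m j := by
    nth_rewrite 1 [← c]; group
  rw [this]; exact AA_mem hj

theorem H_norm (hs : BraidSys G N s) {m : ℕ} (hm : m ≤ N) {h u : G} (hh : h ∈ HH s m) (hu : u ∈ UU s m) :
    h * u * h⁻¹ ∈ UU s m := by
  have key : ∀ g : G, (∀ j, j < m → g * AA s m j * g⁻¹ ∈ UU s m) →
      ∀ u ∈ UU s m, g * u * g⁻¹ ∈ UU s m := by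
    intro g hg u hu
    have : UU s m ≤ (UU s m).comap (MulAut.conj g).toMonoidHom := by
      conv_lhs => rw [UU]
      rw [Subgroup.closure_le]
      rintro _ ⟨j, hj, rfl⟩
      exact hg j hj
    exact this hu
  unfold HH at hh
  induction hh using Subgroup.closure_induction_left generalizing u with
  | one => simpa using hu
  | mul_left x hx y _ ih =>
    obtain ⟨i, hi, rfl⟩ := hx
    have := key (s i) (fun j hj => (conj_gen hs hm hi hj).1) _ (ih hu)
    convert this using 1; group
  | inv_mul_cancel x hx y _ ih =>
    obtain ⟨i, hi, rfl⟩ := hx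
    have := key (s i)⁻¹ (fun j hj => by
      rw [inv_inv]; exact (conj_gen hs hm hi hj).2) _ (ih hu)
    convert this using 1; group

theorem decomp_s2 (hs : BraidSys G N s) {m : ℕ} (hm : m ≤ N) {x : G} (hx : x ∈ HH s (m + 1)) :
    ∃ l ≤ m, ∃ u ∈ UU s m, ∃ h ∈ HH s m, x = CC s m l * u * h := by
  have gen : ∀ {i : ℕ}, i + 1 < m → s i ∈ HH s m := fun {i} hi =>
    Subgroup.subset_closure ⟨i, hi, rfl⟩
  have pos : ∀ i l, i < m → l ≤ m → ∃ l' ≤ m, ∃ y, (y ∈ HH s m ∨ y ∈ UU s m) ∧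
      s i * CC s m l = CC s m l' * y := by
    intro i l hi hl
    rcases lt_trichotomy i l with h | h | h
    · by_cases h' : i + 1 = l
      · subst h'
        exact ⟨i, by omega, 1, Or.inl (one_mem _), by rw [CC_step s hi, mul_one]⟩
      · exact ⟨l, hl, s i, Or.inl (gen (by omega)), (CC_comm hs hm (by omega)).eq⟩
    · subst h
      exact ⟨i + 1, by omega, AA s m i, Or.inr (AA_mem hi), by rw [AA]; group⟩
    · obtain ⟨k, rfl⟩ : ∃ k, i = k + 1 := ⟨i - 1, by omega⟩
      exact ⟨l, hl, s k, Or.inl (gen hi), CC_shift hs hm (by omega) hi⟩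
  have neg : ∀ i l, i < m → l ≤ m → ∃ l' ≤ m, ∃ y, (y ∈ HH s m ∨ y ∈ UU s m) ∧
      (s i)⁻¹ * CC s m l = CC s m l' * y := by
    intro i l hi hl
    rcases lt_trichotomy i l with h | h | h
    · by_cases h' : i + 1 = l
      · subst h'
        exact ⟨i, by omega, (AA s m i)⁻¹, Or.inr (inv_mem (AA_mem hi)), by rw [AA]; group⟩
      · exact ⟨l, hl, (s i)⁻¹, Or.inl (inv_mem (gen (by omega))),
          (CC_comm hs hm (by omega)).inv_left.eq⟩
    · subst h
      exact ⟨i + 1, by omega, 1, Or.inl (one_mem _), by rw [CC_step s hi]; group⟩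
    · obtain ⟨k, rfl⟩ : ∃ k, i = k + 1 := ⟨i - 1, by omega⟩
      refine ⟨l, hl, (s k)⁻¹, Or.inl (inv_mem (gen hi)), ?_⟩
      rw [inv_mul_eq_iff_eq_mul, ← mul_assoc, eq_mul_inv_iff_mul_eq]
      exact (CC_shift hs hm (by omega) hi).symm
  have absorb : ∀ (g : G), (∀ l, l ≤ m → ∃ l' ≤ m, ∃ y, (y ∈ HH s m ∨ y ∈ UU s m) ∧
      g * CC s m l = CC s m l' * y) → ∀ x, (∃ l ≤ m, ∃ u ∈ UU s m, ∃ h ∈ HH s m,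
        x = CC s m l * u * h) → (∃ l ≤ m, ∃ u ∈ UU s m, ∃ h ∈ HH s m,
        g * x = CC s m l * u * h) := by
    rintro g hg _ ⟨l, hl, u, hu, h, hh, rfl⟩
    obtain ⟨l', hl', y, hy | hy, e⟩ := hg l hl
    · refine ⟨l', hl', y * u * y⁻¹, H_norm hs hm hy hu, y * h, mul_mem hy hh, ?_⟩
      rw [← mul_assoc, ← mul_assoc, e]; group
    · refine ⟨l', hl', y * u, mul_mem hy hu, h, hh, ?_⟩
      rw [← mul_assoc, ← mul_assoc, e]; group
  conv at hx => rw [HH]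
  induction hx using Subgroup.closure_induction_left with
  | one => exact ⟨m, le_rfl, 1, one_mem _, 1, one_mem _, by rw [CC_self]; simp⟩
  | mul_left x hx y _ ih =>
    obtain ⟨i, hi, rfl⟩ := hx
    exact absorb _ (fun l hl => pos i l (by omega) hl) _ ih
  | inv_mul_cancel x hx y _ ih =>
    obtain ⟨i, hi, rfl⟩ := hx
    exact absorb _ (fun l hl => neg i l (by omega) hl) _ ih

end Comb


/-! ### Faithfulness of the action on `O` -/

section Faithful

variable {G : Type*} [Group G] {s : ℕ → G} {N : ℕ}

theorem AA_push (hs : BraidSys G N s) (ρ : G →* MulAut O) (hρ : ∀ i, i < N → ρ (s i) = sO i)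
    {m : ℕ} (hm : m ≤ N) (d j : ℕ) (hd : j + d + 1 = m) :
    IsPush m j (wt m j) (ρ (AA s m j)) (b j * b m) := by
  have mem : ∀ j, b j * b m ∈ D m j := fun j =>
    mul_mem (b_mem_D (Or.inr rfl)) (b_mem_D (Or.inl rfl))
  have fzz : ∀ (j : ℕ) (f : MulAut O), f (b m) = (b j * b m) * b m * (b j * b m)⁻¹ →
      f (b j) = (b j * b m) * b j * (b j * b m)⁻¹ → f (b j * b m) = b j * b m := by
    intro j f h1 h2
    rw [map_mul, h1, h2]; group
  induction d generalizing j with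
  | zero =>
    obtain rfl : m = j + 1 := by omega
    have h1 : ρ (AA s (j + 1) j) (b (j + 1)) =
        (b j * b (j + 1)) * b (j + 1) * (b j * b (j + 1))⁻¹ := by
      rw [AA_last, map_mul, hρ j (by omega), MulAut.mul_apply, sO_succ, sO_self]
      simp only [mul_inv_rev, b_inv, mul_assoc, b_sq_assoc]
    have h2 : ρ (AA s (j + 1) j) (b j) = (b j * b (j + 1)) * b j * (b j * b (j + 1))⁻¹ := by
      rw [AA_last, map_mul, hρ j (by omega), MulAut.mul_apply, sO_self, map_mul, map_mul,
        sO_succ, sO_self]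
      simp only [mul_inv_rev, b_inv, mul_assoc, b_sq_assoc]
    refine ⟨mem j, fzz j _ h1 h2, h1, h2, ?_⟩
    intro k hk1 hk2
    rw [AA_last, map_mul, hρ j (by omega), MulAut.mul_apply, sO_other j k hk2 hk1,
      sO_other j k hk2 hk1]
    have : wt (j + 1) j k = 0 := by unfold wt; rw [if_neg (by omega)]
    rw [this]; simp
  | succ d ih =>
    have ih := ih (j + 1) (by omega)
    have hrec := AA_rec hs (j := j) hm (by omega)
    have act : ∀ x y, ρ (s j) y = x →
        ρ (AA s m j) x = sO j (ρ (AA s m (j + 1)) y) := by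
      rintro x y rfl
      rw [hrec, map_mul, map_mul, map_inv, hρ j (by omega)]
      simp [MulAut.mul_apply]
    rw [hρ j (by omega)] at act
    have cm : sO j (b m) = b m := sO_other j m (by omega) (by omega)
    have tz : sO j (b (j + 1) * b m) = b j * b m := by rw [map_mul, sO_succ, cm]
    have h1 : ρ (AA s m j) (b m) = (b j * b m) * b m * (b j * b m)⁻¹ := by
      rw [act _ _ cm, ih.hm, map_mul, map_mul, map_inv, tz, cm]
    have h2 : ρ (AA s m j) (b j) = (b j * b m) * b j * (b j * b m)⁻¹ := by
      rw [act _ _ (sO_succ j), ih.hj, map_mul, map_mul, map_inv, tz, sO_succ]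
    refine ⟨mem j, fzz j _ h1 h2, h1, h2, ?_⟩
    intro k hk1 hk2
    by_cases hk3 : k = j + 1
    · subst hk3
      have e : wt m j (j + 1) = 2 := by unfold wt; rw [if_pos (by omega)]
      have e' : wt m (j + 1) j = 0 := by unfold wt; rw [if_neg (by omega)]
      have c : sO j (b (j + 1) * b j * b (j + 1)) = b (j + 1) := by
        rw [map_mul, map_mul, sO_succ, sO_self]
        simp only [mul_assoc, b_sq_assoc, b_sq, mul_one]
      rw [act _ _ c, map_mul (ρ _), map_mul (ρ _), ih.hj, ih.hk j (by omega) (by omega), e, e']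
      simp only [zpow_zero, one_mul, inv_one, mul_one, map_mul, map_inv, sO_succ, sO_self, cm]
      simp only [zpow_ofNat, pow_two, mul_inv_rev, b_inv, mul_assoc, b_sq_assoc]
    · have e : wt m (j + 1) k = wt m j k := by
        unfold wt
        congr 1
        apply propext
        omega
      have c := sO_other j k hk2 hk3
      rw [act _ _ c, ih.hk k hk1 hk3, map_mul, map_mul, map_inv, map_zpow, tz, c, e]

/-- Detects the parity of the letter `m`. -/
def chi (m : ℕ) : O →* ℤˣ := olift (fun i => if i = m then -1 else 1) (by
  intro i; split_ifs <;> simp)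

theorem chi_conj (m : ℕ) (z y : O) : chi m (z * y * z⁻¹) = chi m y := by
  rw [map_mul, map_mul, map_inv, mul_comm, ← mul_assoc, inv_mul_cancel, one_mul]

/-- Kills the letter `m`. -/
def kil (m : ℕ) : O →* O := olift (fun i => if i = m then 1 else b i) (by
  intro i; split_ifs <;> simp [b_sq])

theorem kil_self (m : ℕ) : kil m (b m) = 1 := by simp [kil, olift_b]

theorem kil_ne {m k : ℕ} (h : k ≠ m) : kil m (b k) = b k := by simp [kil, olift_b, h]

theorem inv_of_closure {S : Set G} (ρ : G →* MulAut O) {H : Type*} [Group H] (f : O →* H)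
    (h : ∀ g ∈ S, ∀ k, f (ρ g (b k)) = f (b k)) {g : G} (hg : g ∈ Subgroup.closure S) (x : O) :
    f (ρ g x) = f x := by
  have h' : ∀ g ∈ S, ∀ x, f (ρ g x) = f x := by
    intro g hg x
    have : f.comp (ρ g).toMonoidHom = f := o_hom_ext (h g hg)
    exact DFunLike.congr_fun this x
  induction hg using Subgroup.closure_induction generalizing x with
  | mem g hg => exact h' g hg x
  | one => simp
  | mul a c _ _ ha hc => rw [map_mul, MulAut.mul_apply, ha, hc]
  | inv a _ ha =>
    rw [← ha ((ρ a⁻¹) x), ← MulAut.mul_apply, ← map_mul]; simp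

theorem faithful_aux (hs : BraidSys G N s) (ρ : G →* MulAut O)
    (hρ : ∀ i, i < N → ρ (s i) = sO i) (m : ℕ) (hm : m ≤ N + 1) (x : G) (hx : x ∈ HH s m)
    (hx1 : ρ x = 1) : x = 1 := by
  induction m generalizing x with
  | zero =>
    have : {x | ∃ i, i + 1 < 0 ∧ x = s i} = (∅ : Set G) := by
      ext; simp
    rw [HH, this, Subgroup.closure_empty] at hx
    exact hx
  | succ m ih =>
    have hmN : m ≤ N := by omega
    obtain ⟨l, hl, u, hu, h, hh, rfl⟩ := decomp_s2 hs hmN hx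
    have push : ∀ j, j < m → IsPush m j (wt m j) (ρ (AA s m j)) (b j * b m) := fun j hj =>
      AA_push hs ρ hρ hmN (m - j - 1) j (by omega)
    have chiU : ∀ y, chi m (ρ u y) = chi m y := by
      refine inv_of_closure ρ (chi m) ?_ hu
      rintro _ ⟨j, hj, rfl⟩ k
      have P := push j hj
      by_cases h1 : k = m
      · subst h1; rw [P.hm, chi_conj]
      by_cases h2 : k = j
      · subst h2; rw [P.hj, chi_conj]
      rw [P.hk k h1 h2, chi_conj]
    have chiH : ∀ y, chi m (ρ h y) = chi m y := by
      refine inv_of_closure ρ (chi m) ?_ hh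
      rintro _ ⟨i, hi, rfl⟩ k
      rw [hρ i (by omega)]
      by_cases h1 : k = i
      · subst h1
        rw [sO_self]
        have : k ≠ m := by omega
        have h2 : k + 1 ≠ m := by omega
        simp [chi, olift_b, this, h2]
      by_cases h2 : k = i + 1
      · subst h2
        rw [sO_succ]
        have : i ≠ m := by omega
        have h2 : i + 1 ≠ m := by omega
        simp [chi, olift_b, this, h2]
      rw [sO_other i k h1 h2]
    have kilU : ∀ y, kil m (ρ u y) = kil m y := by
      refine inv_of_closure ρ (kil m) ?_ hu
      rintro _ ⟨j, hj, rfl⟩ k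
      have P := push j hj
      have hjm : j ≠ m := by omega
      by_cases h1 : k = m
      · subst h1; rw [P.hm]; simp [kil_self]
      by_cases h2 : k = j
      · subst h2; rw [P.hj]; simp [kil_self, kil_ne hjm]
      rw [P.hk k h1 h2]
      unfold wt
      split_ifs
      · simp [kil_self, kil_ne hjm, kil_ne h1, zpow_ofNat, pow_two, b_sq, b_inv]
      · simp
    have CCb : ∀ d l, l + d = m → ρ (CC s m l) (b m) = b l := by
      intro d
      induction d with
      | zero => intro l e; obtain rfl : l = m := by omega
                rw [CC_self]; simp
      | succ d ihd =>
        intro l e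
        rw [CC_step s (by omega), map_mul, MulAut.mul_apply, ihd (l + 1) (by omega),
          hρ l (by omega), sO_succ]
    have hlm : l = m := by
      by_contra hne
      have e1 : ρ (u * h) (b l) = b m := by
        have : ρ (u * h) = (ρ (CC s m l))⁻¹ := by
          rw [eq_inv_iff_mul_eq_one, ← map_mul]
          have e2 : u * h * CC s m l = (CC s m l)⁻¹ * (CC s m l * u * h) * CC s m l := by group
          rw [e2, map_mul, map_mul, hx1, ← map_one ρ, ← map_mul, ← map_mul]
          simp
        rw [this, ← CCb (m - l) l (by omega)]; simp
      have e2 := congrArg (chi m) e1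
      rw [map_mul, MulAut.mul_apply, chiU, chiH] at e2
      simp [chi, olift_b, hne] at e2
    subst hlm
    rw [CC_self, one_mul] at hx1 ⊢
    have hhb : ∀ k, l ≤ k → ρ h (b k) = b k := by
      intro k hk
      unfold HH at hh
      clear hx hx1 chiH
      induction hh using Subgroup.closure_induction with
      | mem g hg =>
        obtain ⟨i, hi, rfl⟩ := hg
        rw [hρ i (by omega), sO_other i k (by omega) (by omega)]
      | one => simp
      | mul a c _ _ ha hc => rw [map_mul, MulAut.mul_apply, hc, ha]
      | inv a _ ha => nth_rewrite 1 [← ha]; rw [map_inv]; simp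
    have kilH : ∀ y, kil l (ρ h y) = ρ h (kil l y) := by
      unfold HH at hh
      clear hx hx1 chiH hhb
      induction hh using Subgroup.closure_induction with
      | mem g hg =>
        obtain ⟨i, hi, rfl⟩ := hg
        rw [hρ i (by omega)]
        have : (kil l).comp (sO i).toMonoidHom = (sO i).toMonoidHom.comp (kil l) := by
          apply o_hom_ext
          intro k
          change kil l (sO i (b k)) = sO i (kil l (b k))
          have hil : i ≠ l := by omega
          have hil' : i + 1 ≠ l := by omega
          by_cases h1 : k = i
          · subst h1
            rw [kil_ne hil, sO_self, map_mul, map_mul, kil_ne hil, kil_ne hil']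
          by_cases h2 : k = i + 1
          · subst h2
            rw [kil_ne hil', sO_succ, kil_ne hil]
          rw [sO_other i k h1 h2]
          by_cases h3 : k = l
          · subst h3; rw [kil_self, map_one]
          · rw [kil_ne h3, sO_other i k h1 h2]
        exact fun y => DFunLike.congr_fun this y
      | one => simp
      | mul a c _ _ ha hc =>
        intro y
        rw [map_mul, MulAut.mul_apply, ha, hc]; rfl
      | inv a _ ha =>
        intro y
        have := ha (ρ a⁻¹ y)
        rw [map_inv] at this ⊢
        rw [MulAut.apply_inv_self] at this
        rw [this, MulAut.inv_apply_self]
    have hh1 : ρ h = 1 := by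
      apply o_aut_ext
      intro k
      by_cases hk : k = l
      · rw [hhb k hk.ge]; rfl
      · have e := kilH (b k)
        rw [← kilU, ← MulAut.mul_apply, ← map_mul, hx1, MulAut.one_apply, kil_ne hk] at e
        rw [← e]; rfl
    have h1 : h = 1 := ih (by omega) h hh hh1
    subst h1
    rw [mul_one] at hx1 ⊢
    have hu2 : u ∈ (FreeGroup.lift (fun j : Fin l => AA s l j)).range := by
      rw [FreeGroup.range_lift_eq_closure]
      have : Set.range (fun j : Fin l => AA s l j) = {x | ∃ j, j < l ∧ x = AA s l j} := by
        ext y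
        constructor
        · rintro ⟨j, rfl⟩; exact ⟨j, j.2, rfl⟩
        · rintro ⟨j, hj, rfl⟩; exact ⟨⟨j, hj⟩, rfl⟩
      rw [this]; exact hu
    obtain ⟨w, rfl⟩ := hu2
    have hw : w = 1 := by
      apply push_faithful l (fun j : Fin l => ρ (AA s l j)) (fun j => push j j.2) w
      rw [← hx1]
      have : FreeGroup.lift (fun j : Fin l => ρ (AA s l j)) =
          ρ.comp (FreeGroup.lift (fun j : Fin l => AA s l j)) := by
        ext1 j; simp
      rw [this]; rfl
    rw [hw, map_one]

end Faithful

end Wada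


/-- **Wada's representation of type (2) is faithful.** For every `n ≥ 2`, any group
homomorphism `ψ : B_n → Aut(F_n)` sending each braid generator `σ_i` to the
automorphism with `x_i ↦ x_i x_{i+1}⁻¹ x_i`, `x_{i+1} ↦ x_i`, fixing all other free
generators, is injective. -/
theorem wada_type2_faithful (n : ℕ) (hn : 2 ≤ n)
    (ψ : PresentedGroup (braidRels (n - 1)) →* MulAut (FreeGroup (Fin n)))
    (hψ : ∀ i : Fin (n - 1),
      (ψ (PresentedGroup.of i)) (FreeGroup.of (xL n i)) =
          FreeGroup.of (xL n i) * (FreeGroup.of (xR n i))⁻¹ * FreeGroup.of (xL n i) ∧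
      (ψ (PresentedGroup.of i)) (FreeGroup.of (xR n i)) = FreeGroup.of (xL n i) ∧
      ∀ j : Fin n, j ≠ xL n i → j ≠ xR n i →
        (ψ (PresentedGroup.of i)) (FreeGroup.of j) = FreeGroup.of j) :
    Function.Injective ψ := by
  rw [injective_iff_map_eq_one]
  intro β hβ
  let s : ℕ → PresentedGroup (braidRels (n - 1)) := fun i =>
    if h : i < n - 1 then PresentedGroup.of ⟨i, h⟩ else 1
  have sdef : ∀ i (h : i < n - 1), s i = PresentedGroup.of ⟨i, h⟩ := fun i h => dif_pos h
  have rel : ∀ r ∈ braidRels (n - 1),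
      FreeGroup.lift (fun i : Fin (n - 1) => Wada.sO i) r = 1 := by
    rintro r (⟨i, j, hij, rfl⟩ | ⟨i, j, hij, rfl⟩)
    · simp only [map_mul, map_inv, FreeGroup.lift_apply_of]
      rw [Wada.sO_comm i j hij]; group
    · simp only [map_mul, map_inv, FreeGroup.lift_apply_of]
      rw [← hij, Wada.sO_braid i, mul_inv_cancel]
  let ρ : PresentedGroup (braidRels (n - 1)) →* MulAut Wada.O := PresentedGroup.toGroup rel
  have ρof : ∀ i : Fin (n - 1), ρ (PresentedGroup.of i) = Wada.sO i := fun i =>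
    PresentedGroup.toGroup.of rel
  have hs : Wada.BraidSys (PresentedGroup (braidRels (n - 1))) (n - 1) s := by
    constructor
    · intro i j hij hj
      rw [sdef i (by omega), sdef j hj]
      have := PresentedGroup.one_of_mem (rels := braidRels (n - 1))
        (Or.inl ⟨⟨i, by omega⟩, ⟨j, hj⟩, hij, rfl⟩)
      simp only [map_mul, map_inv] at this
      rw [mul_inv_eq_one, mul_inv_eq_iff_eq_mul] at this
      exact this
    · intro i hi
      rw [sdef i (by omega), sdef (i + 1) hi]
      have := PresentedGroup.one_of_mem (rels := braidRels (n - 1))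
        (Or.inr ⟨⟨i, by omega⟩, ⟨i + 1, hi⟩, rfl, rfl⟩)
      simp only [map_mul, map_inv] at this
      rw [mul_inv_eq_one] at this
      exact this
  have hρ : ∀ i, i < n - 1 → ρ (s i) = Wada.sO i := by
    intro i hi
    rw [sdef i hi, ρof]
  have hall : β ∈ Wada.HH s (n - 1 + 1) := by
    have : Set.range (PresentedGroup.of (rels := braidRels (n - 1))) ⊆
        {x | ∃ i, i + 1 < n - 1 + 1 ∧ x = s i} := by
      rintro _ ⟨i, rfl⟩
      exact ⟨i, by omega, (sdef i i.2).symm⟩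
    have h2 := Subgroup.closure_mono this
    rw [PresentedGroup.closure_range_of] at h2
    exact h2 (Subgroup.mem_top β)
  apply Wada.faithful_aux hs ρ hρ (n - 1 + 1) le_rfl β hall
  -- compare the two actions
  let φ : FreeGroup (Fin n) →* Wada.O := FreeGroup.lift fun i => Wada.b i * Wada.b n
  have φof : ∀ i, φ (FreeGroup.of i) = Wada.b i * Wada.b n := fun i => FreeGroup.lift_apply_of
  have hfix : ∀ k, n ≤ k → ρ β (Wada.b k) = Wada.b k := by
    intro k hk
    have hg : ∀ g ∈ Subgroup.closure (Set.range (PresentedGroup.of (rels := braidRels (n - 1)))),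
        ρ g (Wada.b k) = Wada.b k := by
      intro g hg
      induction hg using Subgroup.closure_induction with
      | mem g hg =>
        obtain ⟨i, rfl⟩ := hg
        rw [ρof, Wada.sO_other i k (by omega) (by omega)]
      | one => simp
      | mul a c _ _ ha hc => rw [map_mul, MulAut.mul_apply, hc, ha]
      | inv a _ ha => nth_rewrite 1 [← ha]; rw [map_inv]; simp
    exact hg β (by rw [PresentedGroup.closure_range_of]; exact Subgroup.mem_top β)
  have hgen : ∀ (i : Fin (n - 1)) (x : FreeGroup (Fin n)),
      φ (ψ (PresentedGroup.of i) x) = Wada.sO i (φ x) := by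
    intro i x
    have : φ.comp (ψ (PresentedGroup.of i)).toMonoidHom = (Wada.sO i).toMonoidHom.comp φ := by
      apply FreeGroup.ext_hom
      intro j
      change φ (ψ (PresentedGroup.of i) (FreeGroup.of j)) = Wada.sO i (φ (FreeGroup.of j))
      have hnn : Wada.sO i (Wada.b n) = Wada.b n := Wada.sO_other i n (by omega) (by omega)
      obtain ⟨h1, h2, h3⟩ := hψ i
      have eL : ((xL n i : Fin n) : ℕ) = i := rfl
      have eR : ((xR n i : Fin n) : ℕ) = i + 1 := rfl
      by_cases hL : j = xL n i
      · subst hL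
        rw [h1, map_mul, map_mul, map_inv, φof, φof, eL, eR, map_mul, hnn, Wada.sO_self]
        simp only [mul_inv_rev, Wada.b_inv, mul_assoc, Wada.b_sq_assoc]
      by_cases hR : j = xR n i
      · subst hR
        rw [h2, φof, φof, eL, eR, map_mul, hnn, Wada.sO_succ]
      have hL' : (j : ℕ) ≠ i := fun h => hL (Fin.ext h)
      have hR' : (j : ℕ) ≠ i + 1 := fun h => hR (Fin.ext h)
      rw [h3 j hL hR, φof, map_mul, hnn, Wada.sO_other i j hL' hR']
    exact DFunLike.congr_fun this x
  have hcomp : ∀ x, φ (ψ β x) = ρ β (φ x) := by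
    have hg : ∀ g ∈ Subgroup.closure (Set.range (PresentedGroup.of (rels := braidRels (n - 1)))),
        ∀ x, φ (ψ g x) = ρ g (φ x) := by
      intro g hg
      induction hg using Subgroup.closure_induction with
      | mem g hg =>
        obtain ⟨i, rfl⟩ := hg
        intro x
        rw [ρof, hgen]
      | one => simp
      | mul a c _ _ ha hc =>
        intro x
        rw [map_mul, MulAut.mul_apply, ha, hc, map_mul]; rfl
      | inv a _ ha =>
        intro x
        have := ha (ψ a⁻¹ x)
        rw [map_inv, MulAut.apply_inv_self] at this
        rw [map_inv, map_inv, this, MulAut.inv_apply_self]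
    exact hg β (by rw [PresentedGroup.closure_range_of]; exact Subgroup.mem_top β)
  apply Wada.o_aut_ext
  intro k
  rw [MulAut.one_apply]
  by_cases hk : n ≤ k
  · exact hfix k hk
  · have := hcomp (FreeGroup.of ⟨k, by omega⟩)
    rw [hβ, MulAut.one_apply, φof, map_mul, hfix n le_rfl] at this
    exact (mul_right_cancel this).symm
end

section
/- For every n ≥ 2, Wada's representation of type (3) is faithful: the group homomorphism ψ : B_n → Aut(F_n) determined by sending each generator σ_i to the automorphism σ̂_i that maps x_i to x_i^2 x_{i+1}, maps x_{i+1} to x_{i+1}^{−1} x_i^{−1} x_{i+1}, and fixes all other free generators, is injective. -/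
namespace WadaThree

/-- Reduced words. -/
abbrev V := {l : List ℕ // l.IsChain (· ≠ ·)}

/-- Left multiplication of a word by a letter. -/
def actL (i : ℕ) : List ℕ → List ℕ
  | [] => [i]
  | j :: r => if i = j then r else i :: j :: r

theorem actL_chain (i : ℕ) (l : List ℕ) (h : l.IsChain (· ≠ ·)) :
    (actL i l).IsChain (· ≠ ·) := by
  cases l with
  | nil => simp [actL]
  | cons j r =>
    simp only [actL]
    split_ifs with hij
    · exact h.tail
    · exact List.isChain_cons_cons.2 ⟨hij, h⟩

theorem actL_actL (i : ℕ) (l : List ℕ) (h : l.IsChain (· ≠ ·)) :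
    actL i (actL i l) = l := by
  cases l with
  | nil => simp [actL]
  | cons j r =>
    simp only [actL]
    split_ifs with hij
    · subst hij
      cases r with
      | nil => simp
      | cons k t =>
        have := (List.isChain_cons_cons.1 h).1
        simp [this]
    · simp

/-- The action of a letter on reduced words. -/
def act (i : ℕ) (v : V) : V := ⟨actL i v.1, actL_chain i v.1 v.2⟩

theorem act_inv (i : ℕ) : Function.Involutive (act i) := fun v =>
  Subtype.ext (actL_actL i v.1 v.2)

/-- The ambient group. -/
abbrev W := Equiv.Perm V

/-- The standard generators. -/
def s (i : ℕ) : W := (act_inv i).toPerm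

theorem s_apply (i : ℕ) (v : V) : (s i v).1 = actL i v.1 := rfl

theorem s_mul_s (i : ℕ) : s i * s i = 1 := by
  ext1 v
  exact act_inv i v

theorem s_inv (i : ℕ) : (s i)⁻¹ = s i := by
  rw [inv_eq_iff_mul_eq_one, s_mul_s]

theorem s_s_mul (i : ℕ) (x : W) : s i * (s i * x) = x := by
  rw [← mul_assoc, s_mul_s, one_mul]

/-- Evaluation of a word. -/
def wd (l : List ℕ) : W := (l.map s).prod

@[simp] theorem wd_nil : wd [] = 1 := rfl

@[simp] theorem wd_cons (i : ℕ) (l : List ℕ) : wd (i :: l) = s i * wd l := by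
  simp [wd]

theorem wd_append (l m : List ℕ) : wd (l ++ m) = wd l * wd m := by
  simp [wd]

theorem wd_inv (l : List ℕ) : (wd l)⁻¹ = wd l.reverse := by
  induction l with
  | nil => simp
  | cons i l ih => simp [wd_append, ih, s_inv]

/-- The empty word. -/
def e0 : V := ⟨[], by simp⟩

theorem wd_app (l : List ℕ) (v : V) (h : (l ++ v.1).IsChain (· ≠ ·)) :
    wd l v = ⟨l ++ v.1, h⟩ := by
  induction l with
  | nil => rfl
  | cons i l ih =>
    have h2 : (l ++ v.1).IsChain (· ≠ ·) := List.IsChain.tail h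
    apply Subtype.ext
    rw [wd_cons, Equiv.Perm.mul_apply, ih h2, s_apply]
    simp only [List.cons_append] at h ⊢
    cases hl : l ++ v.1 with
    | nil => simp [actL]
    | cons j r =>
      rw [hl] at h
      have := (List.isChain_cons_cons.1 h).1
      simp [actL, this]

theorem wd_act (i : ℕ) (v : V) : wd (s i v).1 = s i * wd v.1 := by
  rw [s_apply]
  obtain ⟨l, hl⟩ := v
  cases l with
  | nil => simp [actL]
  | cons j r =>
    simp only [actL]
    split_ifs with hij
    · subst hij; simp [s_s_mul]
    · simp

theorem wd_wd (l : List ℕ) (v : V) : wd (wd l v).1 = wd l * wd v.1 := by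
  induction l with
  | nil => simp
  | cons i l ih => rw [wd_cons, Equiv.Perm.mul_apply, wd_act, ih, mul_assoc]

theorem len_act (i : ℕ) (v : V) : (s i v).1.length ≤ v.1.length + 1 := by
  rw [s_apply]
  obtain ⟨l, hl⟩ := v
  cases l with
  | nil => simp [actL]
  | cons j r =>
    simp only [actL]
    split_ifs with hij
    · simp; omega
    · simp

theorem len_wd (l : List ℕ) (v : V) : (wd l v).1.length ≤ l.length + v.1.length := by
  induction l with
  | nil => simp
  | cons i l ih =>
    have := len_act i (wd l v)
    rw [wd_cons, Equiv.Perm.mul_apply, List.length_cons]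
    omega

/-- The reflection with edge `g ++ [i]`. -/
def R (g : List ℕ) (i : ℕ) : W := wd g * s i * (wd g)⁻¹

/-- Validity of an edge. -/
def Ed (g : List ℕ) (i : ℕ) : Prop := (g ++ [i]).IsChain (· ≠ ·)

theorem Ed.left {g : List ℕ} {i : ℕ} (h : Ed g i) : g.IsChain (· ≠ ·) :=
  List.IsChain.left_of_append h

theorem R_mul_R (g : List ℕ) (i : ℕ) : R g i * R g i = 1 := by
  simp [R, mul_assoc, s_s_mul]

theorem R_inv (g : List ℕ) (i : ℕ) : (R g i)⁻¹ = R g i := by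
  rw [inv_eq_iff_mul_eq_one, R_mul_R]

theorem R_eq_wd (g : List ℕ) (i : ℕ) : R g i = wd (g ++ i :: g.reverse) := by
  rw [R, wd_append, wd_cons, wd_inv, mul_assoc]

/-- The length of a group element. -/
def L (w : W) : ℕ := (w e0).1.length

theorem L_wd_le (l : List ℕ) : L (wd l) ≤ l.length := by
  have := len_wd l e0
  simpa [L, e0] using this

theorem L_R_le (g : List ℕ) (i : ℕ) : L (R g i) ≤ 2 * g.length + 1 := by
  rw [R_eq_wd]
  refine (L_wd_le _).trans ?_
  simp; omega

theorem L_R (g : List ℕ) (i : ℕ) (h : Ed g i) : L (R g i) = 2 * g.length + 1 := by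
  have h2 : (g ++ i :: g.reverse ++ e0.1).IsChain (· ≠ ·) := by
    simp only [e0, List.append_nil]
    have h3 : (i :: g.reverse).IsChain (· ≠ ·) := by
      have : ((g ++ [i]).reverse).IsChain (· ≠ ·) := by
        rw [List.isChain_reverse]
        exact List.IsChain.imp (fun _ _ h => Ne.symm h) h
      simpa using this
    have h4 := h
    unfold Ed at h4
    rw [List.isChain_append] at h4 ⊢
    refine ⟨h4.1, h3, ?_⟩
    intro x hx y hy
    exact h4.2.2 x hx y (by simpa using hy)
  rw [R_eq_wd, L, wd_app _ _ h2]
  simp [e0]; omega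

theorem side_iff (g : List ℕ) (i : ℕ) (h : Ed g i) (v : V) :
    (g ++ [i]) <+: v.1 ↔ ((wd g)⁻¹ v).1.head? = some i := by
  induction g generalizing v with
  | nil =>
    obtain ⟨l, hl⟩ := v
    cases l with
    | nil => simp
    | cons j r => simp [List.cons_prefix_cons, eq_comm]
  | cons x g ih =>
    have h' : Ed g i := List.IsChain.tail h
    rw [wd_cons, mul_inv_rev, Equiv.Perm.mul_apply, s_inv, ← ih h', s_apply]
    obtain ⟨l, hl⟩ := v
    have hx : (g ++ [i]).head? ≠ some x := by
      unfold Ed at h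
      rw [List.cons_append] at h
      cases hg : g ++ [i] with
      | nil => simp
      | cons y t =>
        rw [hg] at h
        have := (List.isChain_cons_cons.1 h).1
        simpa using this.symm
    have key : ∀ t, ¬ ((g ++ [i]) <+: x :: t) := by
      intro t ht
      cases hg : g ++ [i] with
      | nil => simp at hg
      | cons y u =>
        rw [hg] at ht hx
        rw [List.cons_prefix_cons] at ht
        simp [ht.1] at hx
    cases l with
    | nil => simp [actL, key]
    | cons j r =>
      simp only [actL, List.cons_append, List.cons_prefix_cons]
      split_ifs with hij
      · simp [hij]
      · simp [hij, key]

theorem head_act (i : ℕ) (v : V) : (s i v).1.head? = some i ↔ ¬ v.1.head? = some i := by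
  rw [s_apply]
  obtain ⟨l, hl⟩ := v
  cases l with
  | nil => simp [actL]
  | cons j r =>
    simp only [actL]
    split_ifs with hij
    · subst hij
      cases r with
      | nil => simp
      | cons k t =>
        have := (List.isChain_cons_cons.1 hl).1
        simpa using this.symm
    · simp; exact fun h => hij h.symm

/-- A reflection exchanges the two sides of its edge. -/
theorem swap_side (g : List ℕ) (i : ℕ) (h : Ed g i) (v : V) :
    (g ++ [i]) <+: (R g i v).1 ↔ ¬ (g ++ [i]) <+: v.1 := by
  rw [side_iff g i h, side_iff g i h, R, Equiv.Perm.mul_apply, Equiv.Perm.mul_apply,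
    ← Equiv.Perm.mul_apply (wd g)⁻¹ (wd g), inv_mul_cancel, Equiv.Perm.one_apply, head_act]

theorem conj_R (l h : List ℕ) (r : ℕ) (hE : Ed h r) :
    ∃ h', Ed h' r ∧ wd l * R h r * (wd l)⁻¹ = R h' r ∧
      (h' = (wd l ⟨h, hE.left⟩).1 ∨ h' = (wd l ⟨h ++ [r], hE⟩).1) := by
  set v := wd l ⟨h, hE.left⟩ with hv
  have hwv : wd v.1 = wd l * wd h := by rw [hv, wd_wd]
  have hR : wd l * R h r * (wd l)⁻¹ = R v.1 r := by
    rw [R, R, hwv]; group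
  by_cases hc : Ed v.1 r
  · exact ⟨v.1, hc, hR, Or.inl rfl⟩
  · have : ∃ v', v.1 = v' ++ [r] := by
      rcases List.eq_nil_or_concat v.1 with h0 | ⟨L', b, hb⟩
      · exact absurd (by simp [Ed, h0]) hc
      · refine ⟨L', ?_⟩
        rw [List.concat_eq_append] at hb
        by_cases hbr : b = r
        · rw [hb, hbr]
        · refine absurd ?_ hc
          unfold Ed
          rw [List.isChain_append]
          refine ⟨v.2, by simp, ?_⟩
          intro x hx y hy
          rw [hb] at hx
          simp at hx hy
          rw [← hx, ← hy]; exact hbr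
    obtain ⟨v', hv'⟩ := this
    have hw' : wd v.1 = wd v' * s r := by rw [hv', wd_append]; simp
    have hE' : Ed v' r := by unfold Ed; rw [← hv']; exact v.2
    refine ⟨v', hE', ?_, Or.inr ?_⟩
    · rw [hR, R, R, hw', mul_inv_rev, s_inv]
      simp only [mul_assoc, s_s_mul]
    · have h1 : wd v' = wd l * wd (h ++ [r]) := by
        rw [wd_append, ← mul_assoc, ← hwv, hw']; simp [mul_assoc, s_mul_s]
      have h2 : wd v' e0 = ⟨v', hE'.left⟩ := by
        rw [wd_app v' e0 (by simpa [e0] using hE'.left)]; simp [e0]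
      have h3 : wd (h ++ [r]) e0 = ⟨h ++ [r], hE⟩ := by
        rw [wd_app _ e0 (by simpa [e0, Ed] using hE)]; simp [e0]
      rw [h1, Equiv.Perm.mul_apply, h3] at h2
      rw [h2]


/-- Being a reflection. -/
def IsR (a : W) : Prop := ∃ g i, Ed g i ∧ a = R g i

theorem IsR.sq {a : W} (h : IsR a) : a * a = 1 := by
  obtain ⟨g, i, -, rfl⟩ := h; exact R_mul_R g i

theorem IsR.sq_mul {a : W} (h : IsR a) (x : W) : a * (a * x) = x := by
  rw [← mul_assoc, h.sq, one_mul]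

theorem IsR.inv {a : W} (h : IsR a) : a⁻¹ = a := by
  obtain ⟨g, i, -, rfl⟩ := h; exact R_inv g i

theorem IsR.app {a : W} (h : IsR a) (x : V) : a (a x) = x := by
  rw [← Equiv.Perm.mul_apply, h.sq, Equiv.Perm.one_apply]

theorem IsR.conj {a b : W} (ha : IsR a) (hb : IsR b) : IsR (a * b * a) := by
  obtain ⟨g, i, -, rfl⟩ := ha
  obtain ⟨h, r, hE, rfl⟩ := hb
  obtain ⟨h', hE', he, -⟩ := conj_R (g ++ i :: g.reverse) h r hE
  rw [← R_eq_wd, R_inv] at he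
  exact ⟨h', r, hE', he⟩

theorem isR_s (i : ℕ) : IsR (s i) := ⟨[], i, by simp [Ed], by simp [R]⟩

theorem L_s (i : ℕ) : L (s i) = 1 := by
  have h := L_R [] i (by simp [Ed])
  simpa [R] using h

theorem IsR.L_pos {a : W} (h : IsR a) : 1 ≤ L a := by
  obtain ⟨g, i, hE, rfl⟩ := h
  rw [L_R g i hE]; omega

theorem R_conj_app (g : List ℕ) (i : ℕ) (m : List ℕ) (r : ℕ) :
    R g i * R (g ++ [i] ++ m) r * R g i = R (g ++ m) r := by
  have h1 : R g i * wd (g ++ [i] ++ m) = wd (g ++ m) := by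
    simp [R, wd_append, mul_assoc, s_s_mul]
  have h2 : (wd (g ++ [i] ++ m))⁻¹ * R g i = (wd (g ++ m))⁻¹ := by
    rw [← h1, mul_inv_rev, R_inv]
  calc R g i * R (g ++ [i] ++ m) r * R g i
      = (R g i * wd (g ++ [i] ++ m)) * s r * ((wd (g ++ [i] ++ m))⁻¹ * R g i) := by
        rw [R, R]; group
    _ = _ := by rw [h1, h2, R]

theorem lt_of_pre {g h : List ℕ} {i r : ℕ} (hh : Ed h r)
    (hp : (g ++ [i]) <+: h) : L (R g i * R h r * R g i) < L (R h r) := by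
  obtain ⟨m, rfl⟩ := hp
  rw [R_conj_app, L_R _ r hh]
  have := L_R_le (g ++ m) r
  simp at this ⊢
  omega

theorem gt_of_not_pre {g h : List ℕ} {i r : ℕ} (hg : Ed g i) (hh : Ed h r)
    (hne : R g i ≠ R h r)
    (hp : ¬ (g ++ [i]) <+: h) : L (R h r) < L (R g i * R h r * R g i) := by
  obtain ⟨h', hE', he, hc⟩ := conj_R (g ++ i :: g.reverse) h r hh
  rw [← R_eq_wd] at he hc
  rw [R_inv] at he
  have hp2 : ¬ (g ++ [i]) <+: (h ++ [r]) := by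
    intro hq
    rw [List.prefix_concat_iff] at hq
    rcases hq with hq | hq
    · have := List.append_inj' hq rfl
      apply hne
      rw [this.1, List.cons.inj this.2 |>.1]
    · exact hp hq
  have hp' : (g ++ [i]) <+: h' := by
    rcases hc with hc | hc
    · rw [hc, swap_side g i hg]; exact hp
    · rw [hc, swap_side g i hg]; exact hp2
  have := lt_of_pre hE' hp'
  rw [he]
  rw [← he] at this
  have e : R g i * (R g i * R h r * R g i) * R g i = R h r := by
    have hr := R_mul_R g i
    calc _ = (R g i * R g i) * R h r * (R g i * R g i) := by group
      _ = _ := by rw [hr]; simp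
  rw [e] at this
  rw [← he]; exact this

/-- `a` is an ancestor of `b`. -/
def Lt (a b : W) : Prop := L (a * b * a) < L b

theorem lt_iff {g h : List ℕ} {i r : ℕ} (hg : Ed g i) (hh : Ed h r) :
    Lt (R g i) (R h r) ↔ (g ++ [i]) <+: h := by
  constructor
  · intro hl
    by_contra hp
    by_cases hne : R g i = R h r
    · unfold Lt at hl
      rw [hne, R_mul_R, one_mul] at hl
      exact lt_irrefl _ hl
    · have := gt_of_not_pre hg hh hne hp
      unfold Lt at hl
      omega
  · exact lt_of_pre hh

theorem L_conj_ne {a b : W} (ha : IsR a) (hb : IsR b) (hne : a ≠ b) : L (a * b * a) ≠ L b := by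
  obtain ⟨g, i, hg, rfl⟩ := ha
  obtain ⟨h, r, hh, rfl⟩ := hb
  by_cases hp : (g ++ [i]) <+: h
  · exact (lt_of_pre hh hp).ne
  · exact (gt_of_not_pre hg hh hne hp).ne'

theorem Lt.asymm {a b : W} (ha : IsR a) (hb : IsR b) (h1 : Lt a b) (h2 : Lt b a) : False := by
  obtain ⟨g, i, hg, rfl⟩ := ha
  obtain ⟨h, r, hh, rfl⟩ := hb
  rw [lt_iff hg hh] at h1
  rw [lt_iff hh hg] at h2
  have h3 := h1.length_le
  have h4 := h2.length_le
  simp at h3 h4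
  omega

theorem Lt.trans {a b c : W} (ha : IsR a) (hb : IsR b) (hc : IsR c) (h1 : Lt a b) (h2 : Lt b c) :
    Lt a c := by
  obtain ⟨g, i, hg, rfl⟩ := ha
  obtain ⟨h, r, hh, rfl⟩ := hb
  obtain ⟨k, q, hk, rfl⟩ := hc
  rw [lt_iff hg hh] at h1
  rw [lt_iff hh hk] at h2
  rw [lt_iff hg hk]
  exact (h1.trans (List.prefix_append h [r])).trans h2

theorem Lt.chain {a b c : W} (ha : IsR a) (hb : IsR b) (hc : IsR c) (h1 : Lt a b) (h2 : Lt b c) :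
    L (a * (b * c * b) * a) < L c := by
  obtain ⟨g, i, hg, rfl⟩ := ha
  obtain ⟨h, r, hh, rfl⟩ := hb
  obtain ⟨k, q, hk, rfl⟩ := hc
  rw [lt_iff hg hh] at h1
  rw [lt_iff hh hk] at h2
  obtain ⟨m2, rfl⟩ := h2
  obtain ⟨m1, rfl⟩ := h1
  rw [R_conj_app, List.append_assoc _ m1 m2, R_conj_app, L_R _ _ hk]
  have := L_R_le (g ++ (m1 ++ m2)) q
  simp at this ⊢
  omega

theorem Lt.compare {a b c : W} (ha : IsR a) (hb : IsR b) (hc : IsR c) (hne : a ≠ b)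
    (h1 : Lt a c) (h2 : Lt b c) : Lt a b ∨ Lt b a := by
  obtain ⟨g, i, hg, rfl⟩ := ha
  obtain ⟨h, r, hh, rfl⟩ := hb
  obtain ⟨k, q, hk, rfl⟩ := hc
  rw [lt_iff hg hk] at h1
  rw [lt_iff hh hk] at h2
  rw [lt_iff hg hh, lt_iff hh hg]
  have key : ∀ (g h : List ℕ) (i r : ℕ), R g i ≠ R h r → (g ++ [i]) <+: (h ++ [r]) →
      (g ++ [i]) <+: h := by
    intro g h i r hne hp
    rw [List.prefix_concat_iff] at hp
    rcases hp with hq | hq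
    · have := List.append_inj' hq rfl
      exact absurd (by rw [this.1, List.cons.inj this.2 |>.1]) hne
    · exact hq
  rcases (le_total _ _).imp (List.prefix_of_prefix_length_le h1 h2)
    (List.prefix_of_prefix_length_le h2 h1) with h3 | h3
  · exact Or.inl (key _ _ _ _ hne h3)
  · exact Or.inr (key _ _ _ _ hne.symm h3)

/-- The abscissa of letter `i`. -/
def ctr (i : ℕ) : ℚ := -3 * i

/-- Position of a reduced word on the line. -/
def ptL : List ℕ → ℚ
  | [] => 2
  | i :: r => ctr i - 1 / (ptL r - ctr i)

theorem ctr_sep {i j : ℕ} (h : i ≠ j) : 3 ≤ |ctr i - ctr j| := by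
  unfold ctr
  rcases Nat.lt_or_gt_of_ne h with h | h
  · have : (i : ℚ) + 1 ≤ j := by exact_mod_cast h
    rw [le_abs]; left; linarith
  · have : (j : ℚ) + 1 ≤ i := by exact_mod_cast h
    rw [le_abs]; right; linarith

theorem nil_far (i : ℕ) : 1 < |ptL [] - ctr i| := by
  have : (0 : ℚ) ≤ i := by positivity
  simp only [ptL, ctr]
  rw [lt_abs]; left; linarith

theorem pt_aux (l : List ℕ) (h : l.IsChain (· ≠ ·)) :
    ∀ i, (l.head? = some i → |ptL l - ctr i| < 1 ∧ ptL l ≠ ctr i) ∧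
      (l.head? ≠ some i → 1 < |ptL l - ctr i|) := by
  induction l with
  | nil => intro i; simp [nil_far]
  | cons j r ih =>
    have hr := ih h.tail j
    have hj : r.head? ≠ some j := by
      cases r with
      | nil => simp
      | cons k t =>
        have := (List.isChain_cons_cons.1 h).1
        simpa using this.symm
    have h1 := hr.2 hj
    have h2 : |ptL (j :: r) - ctr j| < 1 := by
      simp only [ptL]
      rw [show ctr j - 1 / (ptL r - ctr j) - ctr j = - (1 / (ptL r - ctr j)) by ring, abs_neg,
        abs_div, abs_one, div_lt_one (by linarith)]
      exact h1
    have h3 : ptL (j :: r) ≠ ctr j := by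
      have : ptL r - ctr j ≠ 0 := by
        intro h0; rw [h0] at h1; norm_num at h1
      simp only [ptL]
      intro h0
      have : 1 / (ptL r - ctr j) = 0 := by linarith
      simp_all
    intro i
    constructor
    · intro hi
      simp at hi
      subst hi
      exact ⟨h2, h3⟩
    · intro hi
      have hij : j ≠ i := by simpa using hi
      have h4 := ctr_sep hij
      have h5 := abs_sub_le (ctr j) (ptL (j :: r)) (ctr i)
      rw [abs_sub_comm (ctr j) (ptL (j :: r))] at h5
      linarith

/-- Position of a vertex. -/
def pt (v : V) : ℚ := ptL v.1

theorem pt_ne (v : V) (i : ℕ) : pt v - ctr i ≠ 0 := by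
  by_cases h : v.1.head? = some i
  · exact sub_ne_zero.2 ((pt_aux v.1 v.2 i).1 h).2
  · have := (pt_aux v.1 v.2 i).2 h
    intro h0
    unfold pt at h0
    rw [h0] at this
    norm_num at this

theorem pt_act (i : ℕ) (v : V) : pt (s i v) = ctr i - 1 / (pt v - ctr i) := by
  have h0 := pt_ne v i
  unfold pt at h0 ⊢
  rw [s_apply]
  obtain ⟨l, hl⟩ := v
  cases l with
  | nil => simp [actL, ptL]
  | cons j r =>
    simp only [actL]
    split_ifs with hij
    · subst hij
      have h1 := pt_ne ⟨r, hl.tail⟩ i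
      unfold pt at h1
      simp only [ptL] at h0 ⊢
      field_simp
      ring
    · simp [ptL]

/-- Orientation of a triple. -/
def cyc (x y z : ℚ) : ℚ := (x - y) * (y - z) * (z - x)

theorem cyc_act (i : ℕ) (x y z : V) (h : 0 < cyc (pt x) (pt y) (pt z)) :
    0 < cyc (pt (s i x)) (pt (s i y)) (pt (s i z)) := by
  have hx := pt_ne x i
  have hy := pt_ne y i
  have hz := pt_ne z i
  rw [pt_act, pt_act, pt_act]
  have : cyc (ctr i - 1 / (pt x - ctr i)) (ctr i - 1 / (pt y - ctr i))
      (ctr i - 1 / (pt z - ctr i)) = cyc (pt x) (pt y) (pt z) /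
        ((pt x - ctr i) * (pt y - ctr i) * (pt z - ctr i)) ^ 2 := by
    unfold cyc
    field_simp
    ring
  rw [this]
  positivity

theorem cyc_wd (l : List ℕ) (x y z : V) (h : 0 < cyc (pt x) (pt y) (pt z)) :
    0 < cyc (pt (wd l x)) (pt (wd l y)) (pt (wd l z)) := by
  induction l with
  | nil => simpa using h
  | cons i l ih => simpa using cyc_act i _ _ _ ih

theorem cyc_R {a : W} (ha : IsR a) (x y z : V) (h : 0 < cyc (pt x) (pt y) (pt z)) :
    0 < cyc (pt (a x)) (pt (a y)) (pt (a z)) := by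
  obtain ⟨g, i, -, rfl⟩ := ha
  rw [R_eq_wd]
  exact cyc_wd _ _ _ _ h

theorem convex (e : List ℕ) (he : e ≠ []) (hE : e.IsChain (· ≠ ·)) (x y z : V) (hx : e <+: x.1)
    (hz : e <+: z.1)
    (h1 : pt x < pt y) (h2 : pt y < pt z) : e <+: y.1 := by
  induction e generalizing x y z with
  | nil => exact absurd rfl he
  | cons i e ih =>
    obtain ⟨x, cx⟩ := x
    obtain ⟨y, cy⟩ := y
    obtain ⟨z, cz⟩ := z
    simp only at hx hz ⊢
    unfold pt at h1 h2
    simp only at h1 h2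
    cases x with
    | nil => simp at hx
    | cons ix x =>
    cases z with
    | nil => simp at hz
    | cons iz z =>
    rw [List.cons_prefix_cons] at hx hz
    obtain ⟨rfl, hx⟩ := hx
    obtain ⟨rfl, hz⟩ := hz
    have ax := ((pt_aux _ cx i).1 rfl).1
    have az := ((pt_aux _ cz i).1 rfl).1
    rw [abs_lt] at ax az
    have hy : y.head? = some i := by
      by_contra hy
      have := (pt_aux _ cy i).2 hy
      rw [lt_abs] at this
      rcases this with h | h <;> linarith
    cases y with
    | nil => simp at hy
    | cons iy y =>
    simp at hy
    subst hy
    rw [List.cons_prefix_cons]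
    refine ⟨rfl, ?_⟩
    by_cases hen : e = []
    · simp [hen]
    have hj : ∃ j t, e = j :: t := by
      cases e with
      | nil => exact absurd rfl hen
      | cons j t => exact ⟨j, t, rfl⟩
    obtain ⟨j, t, hjt⟩ := hj
    have hij : iy ≠ j := by
      rw [hjt] at hE
      exact (List.isChain_cons_cons.1 hE).1
    have hd : ∀ w : List ℕ, e <+: w → w.head? = some j := by
      intro w hw
      rw [hjt] at hw
      obtain ⟨u, rfl⟩ := hw
      rfl
    have bx := ((pt_aux _ cx.tail j).1 (hd _ hx)).1
    have bz := ((pt_aux _ cz.tail j).1 (hd _ hz)).1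
    have hsep := ctr_sep hij
    rw [abs_lt] at bx bz
    simp only [List.tail_cons] at bx bz
    have nx := pt_ne ⟨x, cx.tail⟩ iy
    have ny := pt_ne ⟨y, cy.tail⟩ iy
    have nz := pt_ne ⟨z, cz.tail⟩ iy
    simp only [ptL] at h1 h2
    unfold pt at nx ny nz
    simp only at nx ny nz
    have h1' : 1 / (ptL y - ctr iy) < 1 / (ptL x - ctr iy) := by linarith
    have h2' : 1 / (ptL z - ctr iy) < 1 / (ptL y - ctr iy) := by linarith
    refine ih hen hE.tail ⟨x, cx.tail⟩ ⟨y, cy.tail⟩ ⟨z, cz.tail⟩ hx hz ?_ ?_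
    all_goals
      unfold pt
      simp only
      rw [le_abs] at hsep
      rcases hsep with hs | hs
    · have px : ptL x - ctr iy < 0 := by linarith
      have qx : 1 / (ptL x - ctr iy) < 0 := one_div_neg.2 px
      have py : ptL y - ctr iy < 0 := one_div_neg.1 (by linarith)
      have := (one_div_lt_one_div_of_neg py px).1 h1'
      linarith
    · have pz : 0 < ptL z - ctr iy := by linarith
      have qz : 0 < 1 / (ptL z - ctr iy) := one_div_pos.2 pz
      have py : 0 < ptL y - ctr iy := one_div_pos.1 (by linarith)
      have px : 0 < ptL x - ctr iy := by linarith
      have := (one_div_lt_one_div py px).1 h1'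
      linarith
    · have px : ptL x - ctr iy < 0 := by linarith
      have qx : 1 / (ptL x - ctr iy) < 0 := one_div_neg.2 px
      have py : ptL y - ctr iy < 0 := one_div_neg.1 (by linarith)
      have pz : ptL z - ctr iy < 0 := by linarith
      have := (one_div_lt_one_div_of_neg pz py).1 h2'
      linarith
    · have pz : 0 < ptL z - ctr iy := by linarith
      have qz : 0 < 1 / (ptL z - ctr iy) := one_div_pos.2 pz
      have py : 0 < ptL y - ctr iy := one_div_pos.1 (by linarith)
      have := (one_div_lt_one_div pz py).1 h2'
      linarith

/-- The forbidden configuration does not occur. -/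
theorem no_vee {a b c : W} (ha : IsR a) (hb : IsR b) (hc : IsR c) (v : V)
    (h1 : pt (a v) < pt v) (h2 : pt (b (a v)) < pt (a v))
    (h3 : pt (c (b (a v))) < pt (b (a v)))
    (l1 : Lt b a) (l2 : Lt b c) : False := by
  obtain ⟨g, i, hg, rfl⟩ := ha
  obtain ⟨h, r, hh, rfl⟩ := hb
  obtain ⟨k, q, hk, rfl⟩ := hc
  rw [lt_iff hh hg] at l1
  rw [lt_iff hh hk] at l2
  have l1' := l1.trans (List.prefix_append g [i])
  have l2' := l2.trans (List.prefix_append k [q])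
  have s1 := swap_side g i hg v
  have s2 := swap_side h r hh (R g i v)
  have s3 := swap_side k q hk (R h r (R g i v))
  have cv := convex (h ++ [r]) (by simp) hh
  by_cases hx : (h ++ [r]) <+: (R g i v).1
  · have h4 : ¬ (h ++ [r]) <+: (R h r (R g i v)).1 := fun h => s2.1 h hx
    have h5 := s3.2 (fun h => h4 (l2'.trans h))
    exact h4 (cv _ _ _ (l2'.trans h5) hx h3 h2)
  · have h4 := s2.2 hx
    have h5 : (g ++ [i]) <+: v.1 := by
      by_contra h6
      exact hx (l1'.trans (s1.2 h6))
    exact hx (cv _ _ _ h4 (l1'.trans h5) h2 h1)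

theorem ne_of_chain {a b : W} (ha : IsR a) (v : V)
    (h1 : pt (a v) < pt v) (h2 : pt (b (a v)) < pt (a v)) : a ≠ b := by
  rintro rfl
  rw [ha.app] at h2
  exact lt_asymm h1 h2

theorem ne_of_chain' {a b c : W} (ha : IsR a) (v : V)
    (h1 : pt (a v) < pt v) (h2 : pt (b (a v)) < pt (a v))
    (h3 : pt (c (b (a v))) < pt (b (a v))) : a ≠ c := by
  rintro rfl
  have h := cyc_R ha (b (a v)) (a v) v (by
    unfold cyc
    have e1 := sub_pos.2 h1
    have e2 := sub_pos.2 h2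
    have e3 := add_pos e1 e2
    have := mul_pos (mul_pos e1 e2) e3
    linarith)
  rw [ha.app] at h
  unfold cyc at h
  have e1 := sub_pos.2 h1
  have e2 := sub_pos.2 h2
  have e3 := sub_pos.2 h3
  have := mul_pos (mul_pos (add_pos (add_pos e1 e2) e3) e1) (add_pos e2 e3)
  linarith

theorem sgn_aux (p q t : ℚ) (h : q < p) (H : 0 < (p - q) * ((q - t) * (t - p))) :
    q < t ∧ t < p := by
  have H2 := (mul_pos_iff_of_pos_left (sub_pos.2 h)).1 H
  rcases mul_pos_iff.1 H2 with ⟨h1, h2⟩ | ⟨h1, h2⟩ <;> constructor <;> linarith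

/-- Moving up. -/
theorem chain_up {a b : W} (hb : IsR b) (v : V)
    (h1 : pt (a v) < pt v) (h2 : pt (b (a v)) < pt (a v)) :
    pt (b v) < pt (a v) ∧ pt (b (a v)) < pt (b v) := by
  have h := cyc_R hb (b (a v)) (a v) v (by
    unfold cyc
    have e1 := sub_pos.2 h1
    have e2 := sub_pos.2 h2
    have e3 := add_pos e1 e2
    have := mul_pos (mul_pos e1 e2) e3
    linarith)
  rw [hb.app] at h
  unfold cyc at h
  obtain ⟨h3, h4⟩ := sgn_aux (pt (a v)) (pt (b (a v))) (pt (b v)) h2 (by linarith)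
  exact ⟨h4, h3⟩

theorem chain_down {a b : W} (ha : IsR a) (v : V)
    (h1 : pt (a v) < pt v) (h2 : pt (b (a v)) < pt (a v)) :
    pt (a (b (a v))) < pt v ∧ pt (a v) < pt (a (b (a v))) := by
  have h := cyc_R ha (b (a v)) (a v) v (by
    unfold cyc
    have e1 := sub_pos.2 h1
    have e2 := sub_pos.2 h2
    have e3 := add_pos e1 e2
    have := mul_pos (mul_pos e1 e2) e3
    linarith)
  rw [ha.app] at h
  unfold cyc at h
  obtain ⟨h3, h4⟩ := sgn_aux (pt v) (pt (a v)) (pt (a (b (a v)))) h1 (by linarith)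
  exact ⟨h4, h3⟩


/-- Orbit points of a state. -/
def Q (T : ℕ → W) : ℕ → V
  | 0 => e0
  | k + 1 => T k (Q T k)

/-- Admissible states. -/
def Good (n : ℕ) (T : ℕ → W) : Prop :=
  (∀ k < n, IsR (T k)) ∧ ∀ k < n, pt (Q T (k + 1)) < pt (Q T k)

theorem good_move {n : ℕ} {T T' : ℕ → W} {i : ℕ} (hi : i + 1 < n) (hT : Good n T)
    (hs : ∀ k < n, k ≠ i → k ≠ i + 1 → T' k = T k)
    (h1 : IsR (T' i)) (h2 : IsR (T' (i + 1)))
    (hp : ∀ v, T' (i + 1) (T' i v) = T (i + 1) (T i v))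
    (hl : pt (T' i (Q T i)) < pt (Q T i))
    (hr : pt (T (i + 1) (T i (Q T i))) < pt (T' i (Q T i))) : Good n T' := by
  have q1 : ∀ k ≤ i, Q T' k = Q T k := by
    intro k
    induction k with
    | zero => intro _; rfl
    | succ k ih =>
      intro hk
      simp only [Q]
      rw [ih (by omega), hs k (by omega) (by omega) (by omega)]
  have q2 : ∀ d, i + 2 + d ≤ n → Q T' (i + 2 + d) = Q T (i + 2 + d) := by
    intro d
    induction d with
    | zero =>
      intro _
      change T' (i + 1) (T' i (Q T' i)) = T (i + 1) (T i (Q T i))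
      rw [hp, q1 i le_rfl]
    | succ d ih =>
      intro hd
      change T' (i + 2 + d) (Q T' (i + 2 + d)) = T (i + 2 + d) (Q T (i + 2 + d))
      rw [ih (by omega), hs _ (by omega) (by omega) (by omega)]
  refine ⟨?_, ?_⟩
  · intro k hk
    by_cases h3 : k = i
    · rw [h3]; exact h1
    by_cases h4 : k = i + 1
    · rw [h4]; exact h2
    rw [hs k hk h3 h4]
    exact hT.1 k hk
  · intro k hk
    rcases lt_trichotomy k i with h | h | h
    · rw [q1 k h.le, q1 (k + 1) h]; exact hT.2 k hk
    · subst h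
      change pt (T' k (Q T' k)) < pt (Q T' k)
      rw [q1 k le_rfl]; exact hl
    · obtain ⟨d, rfl⟩ := Nat.exists_eq_add_of_lt h
      cases d with
      | zero =>
        have := q2 0 (by omega)
        simp only [Nat.add_zero] at this ⊢
        rw [this]
        change pt (T (i + 1) (T i (Q T i))) < pt (T' i (Q T' i))
        rw [q1 i le_rfl]; exact hr
      | succ d =>
        have e1 := q2 d (by omega)
        have e2 := q2 (d + 1) (by omega)
        rw [show i + (d + 1) + 1 = i + 2 + d by omega] at hk ⊢
        rw [show i + 2 + d + 1 = i + 2 + (d + 1) by omega, e1, e2]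
        exact hT.2 _ hk

theorem good_base (n : ℕ) (T : ℕ → W) (hT : ∀ k < n, T k = s k) : Good n T := by
  refine ⟨fun k hk => by rw [hT k hk]; exact isR_s k, ?_⟩
  have hd : ∀ k ≤ n, ∀ j ≥ k, (Q T k).1.head? ≠ some j := by
    intro k
    induction k with
    | zero => intro _ j _; simp [Q, e0]
    | succ k ih =>
      intro hk j hj
      have h1 := ih (by omega) k le_rfl
      have h2 := (head_act k (Q T k)).2 h1
      simp only [Q]
      rw [hT k (by omega), h2]
      simp; omega
  have hk' : ∀ k < n, |pt (Q T (k + 1)) - ctr k| < 1 := by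
    intro k hk
    have h2 := (head_act k (Q T k)).2 (hd k hk.le k le_rfl)
    rw [← hT k hk] at h2
    exact ((pt_aux _ (Q T (k + 1)).2 k).1 h2).1
  intro k hk
  have h1 := (abs_lt.1 (hk' k hk)).2
  cases k with
  | zero =>
    have : pt (Q T 0) = 2 := rfl
    rw [this]
    simp [ctr] at h1
    simp only [Nat.zero_add]
    linarith
  | succ k =>
    have h2 := (abs_lt.1 (hk' k (by omega))).1
    simp only [ctr] at h1 h2
    push_cast at h1 h2
    linarith

/-- Connectedness strictly below a level. -/
def Conn {B : Type*} (adj : B → B → Prop) (lev : B → ℕ) (m : ℕ) : B → B → Prop :=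
  Relation.ReflTransGen (fun u v => adj u v ∧ lev u < m ∧ lev v < m)

theorem Conn.down {B : Type*} {adj : B → B → Prop} {lev : B → ℕ}
    (hs : ∀ x y, adj x y → adj y x)
    (hne : ∀ x y, adj x y → lev x ≠ lev y)
    (peak : ∀ x y z, adj x y → adj x z → lev y < lev x → lev z < lev x →
      Conn adj lev (lev x) y z) {m : ℕ} {x y : B} (hx : lev x < m)
    (h : Conn adj lev (m + 1) x y) :
    (lev y < m → Conn adj lev m x y) ∧
    (lev y = m → ∀ z, adj y z → lev z < m → Conn adj lev m x z) := by
  induction h with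
  | refl => exact ⟨fun _ => Relation.ReflTransGen.refl, fun h => by omega⟩
  | @tail y z hxy hyz ih =>
    obtain ⟨ha, hy, hz⟩ := hyz
    have hn := hne _ _ ha
    refine ⟨fun hzm => ?_, fun hzm w hw hwm => ?_⟩
    · by_cases hym : lev y < m
      · exact (ih.1 hym).tail ⟨ha, hym, hzm⟩
      · exact ih.2 (by omega) z ha hzm
    · have hym : lev y < m := by omega
      have := peak z y w (hs _ _ ha) hw (by omega) (by omega)
      rw [hzm] at this
      exact (ih.1 hym).trans this

theorem Conn.eq {B : Type*} {adj : B → B → Prop} {lev : B → ℕ}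
    (hs : ∀ x y, adj x y → adj y x)
    (hne : ∀ x y, adj x y → lev x ≠ lev y)
    (peak : ∀ x y z, adj x y → adj x z → lev y < lev x → lev z < lev x →
      Conn adj lev (lev x) y z) {p : ℕ} (hmin : ∀ x, p ≤ lev x) {m : ℕ} {x y : B}
    (hx : lev x = p) (hy : lev y = p) (h : Conn adj lev m x y) : x = y := by
  induction m with
  | zero =>
    rcases Relation.ReflTransGen.cases_tail h with h | ⟨_, _, _, _, h⟩
    · exact h.symm
    · omega
  | succ m ih =>
    by_cases hpm : p < m
    · exact ih ((Conn.down hs hne peak (by omega) h).1 (by omega))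
    · rcases Relation.ReflTransGen.cases_tail h with h | ⟨c, _, h1, h2, h3⟩
      · exact h.symm
      · have := hmin c
        exact absurd (by omega) (hne _ _ h1)

theorem Conn.symm {B : Type*} {adj : B → B → Prop} {lev : B → ℕ}
    (hs : ∀ x y, adj x y → adj y x) {m : ℕ} {x y : B} (h : Conn adj lev m x y) :
    Conn adj lev m y x := by
  induction h with
  | refl => exact Relation.ReflTransGen.refl
  | tail _ h ih => exact Relation.ReflTransGen.head ⟨hs _ _ h.1, h.2.2, h.2.1⟩ ih

theorem Conn.mono {B : Type*} {adj : B → B → Prop} {lev : B → ℕ} {m m' : ℕ} (hm : m ≤ m')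
    {x y : B} (h : Conn adj lev m x y) : Conn adj lev m' x y := by
  induction h with
  | refl => exact Relation.ReflTransGen.refl
  | tail _ h ih => exact Relation.ReflTransGen.tail ih ⟨h.1, by omega, by omega⟩

theorem Conn.cons {B : Type*} {adj : B → B → Prop} {lev : B → ℕ} {m : ℕ}
    {x y z : B} (h : adj x y) (h1 : lev x < m) (h2 : lev y < m) (h3 : Conn adj lev m y z) :
    Conn adj lev m x z := Relation.ReflTransGen.head ⟨h, h1, h2⟩ h3

/-- The data of an action of a braid-like group on states. -/
structure Sys {B : Type*} [Group B] (n : ℕ) (sg : ℕ → B) (st : B → ℕ → W) : Prop where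
  comm : ∀ i j, i + 1 < j → j + 1 < n → sg i * sg j = sg j * sg i
  braid : ∀ i, i + 2 < n → sg i * sg (i + 1) * sg i = sg (i + 1) * sg i * sg (i + 1)
  gen : Subgroup.closure {x | ∃ i, i + 1 < n ∧ x = sg i} = ⊤
  one : ∀ k < n, st 1 k = s k
  st1 : ∀ x i, i + 1 < n → st (x * sg i) i = st x i * st x i * st x (i + 1)
  st2 : ∀ x i, i + 1 < n →
    st (x * sg i) (i + 1) = (st x (i + 1))⁻¹ * (st x i)⁻¹ * st x (i + 1)
  st3 : ∀ x i k, i + 1 < n → k < n → k ≠ i → k ≠ i + 1 → st (x * sg i) k = st x k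

namespace Sys

variable {B : Type*} [Group B] {n : ℕ} {sg : ℕ → B} {st : B → ℕ → W}

theorem inv1 (S : Sys n sg st) (x : B) (i : ℕ) (hi : i + 1 < n) :
    st (x * (sg i)⁻¹) i = st x i * (st x (i + 1))⁻¹ * (st x i)⁻¹ := by
  have h1 := S.st1 (x * (sg i)⁻¹) i hi
  have h2 := S.st2 (x * (sg i)⁻¹) i hi
  rw [inv_mul_cancel_right] at h1 h2
  rw [h1, h2]; group

theorem inv2 (S : Sys n sg st) (x : B) (i : ℕ) (hi : i + 1 < n) :
    st (x * (sg i)⁻¹) (i + 1) = st x i * st x (i + 1) * st x (i + 1) := by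
  have h1 := S.st1 (x * (sg i)⁻¹) i hi
  have h2 := S.st2 (x * (sg i)⁻¹) i hi
  rw [inv_mul_cancel_right] at h1 h2
  rw [h1, h2]; group

theorem inv3 (S : Sys n sg st) (x : B) (i k : ℕ) (hi : i + 1 < n) (hk : k < n) (h1 : k ≠ i)
    (h2 : k ≠ i + 1) : st (x * (sg i)⁻¹) k = st x k := by
  have h := S.st3 (x * (sg i)⁻¹) i k hi hk h1 h2
  rw [inv_mul_cancel_right] at h
  exact h.symm

theorem good (S : Sys n sg st) (x : B) : Good n (st x) := by
  have hx : x ∈ Subgroup.closure {x | ∃ i, i + 1 < n ∧ x = sg i} := by rw [S.gen]; trivial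
  induction hx using Subgroup.closure_induction_right with
  | one => exact good_base n _ S.one
  | mul_right x _ y hy ih =>
    obtain ⟨i, hi, rfl⟩ := hy
    have ha := ih.1 i (by omega)
    have hb := ih.1 (i + 1) hi
    have e1 : st (x * sg i) i = st x (i + 1) := by rw [S.st1 x i hi, ha.sq, one_mul]
    have e2 : st (x * sg i) (i + 1) = st x (i + 1) * st x i * st x (i + 1) := by
      rw [S.st2 x i hi, ha.inv, hb.inv]
    have c1 := ih.2 i (by omega)
    have c2 := ih.2 (i + 1) hi
    have c := chain_up hb (Q (st x) i) c1 c2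
    refine good_move hi ih (fun k hk h1 h2 => S.st3 x i k hi hk h1 h2) ?_ ?_ ?_ ?_ ?_
    · rw [e1]; exact hb
    · rw [e2]; exact hb.conj ha
    · intro v; rw [e1, e2]; simp [hb.app]
    · rw [e1]; exact c.1.trans c1
    · rw [e1]; exact c.2
  | mul_inv_cancel x _ y hy ih =>
    obtain ⟨i, hi, rfl⟩ := hy
    have ha := ih.1 i (by omega)
    have hb := ih.1 (i + 1) hi
    have e1 : st (x * (sg i)⁻¹) i = st x i * st x (i + 1) * st x i := by
      rw [S.inv1 x i hi, ha.inv, hb.inv]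
    have e2 : st (x * (sg i)⁻¹) (i + 1) = st x i := by
      rw [S.inv2 x i hi, mul_assoc, hb.sq, mul_one]
    have c1 := ih.2 i (by omega)
    have c2 := ih.2 (i + 1) hi
    have c := chain_down ha (Q (st x) i) c1 c2
    refine good_move hi ih (fun k hk h1 h2 => S.inv3 x i k hi hk h1 h2) ?_ ?_ ?_ ?_ ?_
    · rw [e1]; exact ha.conj hb
    · rw [e2]; exact ha
    · intro v; rw [e1, e2]; simp [ha.app]
    · rw [e1]; exact c.1
    · rw [e1]; exact lt_trans c2 c.2

theorem isR (S : Sys n sg st) (x : B) {k : ℕ} (hk : k < n) : IsR (st x k) := (S.good x).1 k hk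

theorem p1 (S : Sys n sg st) (x : B) {i : ℕ} (hi : i + 1 < n) :
    st (x * sg i) i = st x (i + 1) := by
  rw [S.st1 x i hi, (S.isR x (by omega)).sq, one_mul]

theorem p2 (S : Sys n sg st) (x : B) {i : ℕ} (hi : i + 1 < n) :
    st (x * sg i) (i + 1) = st x (i + 1) * st x i * st x (i + 1) := by
  rw [S.st2 x i hi, (S.isR x (by omega : i < n)).inv, (S.isR x hi).inv]

theorem m1 (S : Sys n sg st) (x : B) {i : ℕ} (hi : i + 1 < n) :
    st (x * (sg i)⁻¹) i = st x i * st x (i + 1) * st x i := by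
  rw [S.inv1 x i hi, (S.isR x (by omega : i < n)).inv, (S.isR x hi).inv]

theorem m2 (S : Sys n sg st) (x : B) {i : ℕ} (hi : i + 1 < n) :
    st (x * (sg i)⁻¹) (i + 1) = st x i := by
  rw [S.inv2 x i hi, mul_assoc, (S.isR x hi).sq, mul_one]

end Sys

/-- Level of an element. -/
def lev {B : Type*} (n : ℕ) (st : B → ℕ → W) (x : B) : ℕ := ∑ k ∈ Finset.range n, L (st x k)

theorem sum_move (n i : ℕ) (hi : i + 1 < n) (f f' : ℕ → ℕ)
    (h : ∀ k < n, k ≠ i → k ≠ i + 1 → f' k = f k) :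
    ∑ k ∈ Finset.range n, f' k + (f i + f (i + 1)) =
      ∑ k ∈ Finset.range n, f k + (f' i + f' (i + 1)) := by
  have m1 : i ∈ Finset.range n := Finset.mem_range.2 (by omega)
  have m2 : i + 1 ∈ (Finset.range n).erase i := by simp; omega
  rw [← Finset.add_sum_erase _ f m1, ← Finset.add_sum_erase _ f' m1,
    ← Finset.add_sum_erase _ f m2, ← Finset.add_sum_erase _ f' m2]
  have : ∑ k ∈ ((Finset.range n).erase i).erase (i + 1), f' k =
      ∑ k ∈ ((Finset.range n).erase i).erase (i + 1), f k := by
    apply Finset.sum_congr rfl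
    intro k hk
    simp at hk
    exact h k hk.2.2 hk.2.1 hk.1
  rw [this]; ring

namespace Sys

variable {B : Type*} [Group B] {n : ℕ} {sg : ℕ → B} {st : B → ℕ → W}

theorem levP (S : Sys n sg st) (x : B) {i : ℕ} (hi : i + 1 < n) :
    lev n st (x * sg i) + L (st x i) =
      lev n st x + L (st x (i + 1) * st x i * st x (i + 1)) := by
  have := sum_move n i hi (fun k => L (st x k)) (fun k => L (st (x * sg i) k))
    (fun k hk h1 h2 => by simp only [S.st3 x i k hi hk h1 h2])
  simp only [S.p1 x hi, S.p2 x hi] at this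
  unfold lev; omega

theorem levM (S : Sys n sg st) (x : B) {i : ℕ} (hi : i + 1 < n) :
    lev n st (x * (sg i)⁻¹) + L (st x (i + 1)) =
      lev n st x + L (st x i * st x (i + 1) * st x i) := by
  have := sum_move n i hi (fun k => L (st x k)) (fun k => L (st (x * (sg i)⁻¹) k))
    (fun k hk h1 h2 => by simp only [S.inv3 x i k hi hk h1 h2])
  simp only [S.m1 x hi, S.m2 x hi] at this
  unfold lev; omega

/-- Adjacency in the Cayley graph. -/
def Adj (n : ℕ) (sg : ℕ → B) (x y : B) : Prop :=
  ∃ i, i + 1 < n ∧ (y = x * sg i ∨ y = x * (sg i)⁻¹)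

theorem adj_symm (x y : B) (h : Adj n sg x y) : Adj n sg y x := by
  obtain ⟨i, hi, h | h⟩ := h
  · exact ⟨i, hi, Or.inr (by rw [h]; group)⟩
  · exact ⟨i, hi, Or.inl (by rw [h]; group)⟩

theorem ne1 (S : Sys n sg st) (x : B) {i : ℕ} (hi : i + 1 < n) : st x i ≠ st x (i + 1) :=
  ne_of_chain (S.isR x (by omega)) (Q (st x) i) ((S.good x).2 i (by omega))
    ((S.good x).2 (i + 1) hi)

theorem ne2 (S : Sys n sg st) (x : B) {i : ℕ} (hi : i + 2 < n) : st x i ≠ st x (i + 2) :=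
  ne_of_chain' (b := st x (i + 1)) (S.isR x (by omega)) (Q (st x) i) ((S.good x).2 i (by omega))
    ((S.good x).2 (i + 1) (by omega)) ((S.good x).2 (i + 2) hi)

theorem noV (S : Sys n sg st) (x : B) {i : ℕ} (hi : i + 2 < n)
    (h1 : Lt (st x (i + 1)) (st x i)) (h2 : Lt (st x (i + 1)) (st x (i + 2))) : False :=
  no_vee (S.isR x (by omega)) (S.isR x (by omega)) (S.isR x hi) (Q (st x) i)
    ((S.good x).2 i (by omega))
    ((S.good x).2 (i + 1) (by omega)) ((S.good x).2 (i + 2) hi) h1 h2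

theorem lev_ne (S : Sys n sg st) (x y : B) (h : Adj n sg x y) : lev n st x ≠ lev n st y := by
  obtain ⟨i, hi, rfl | rfl⟩ := h
  · have h1 := S.levP x hi
    have h2 := L_conj_ne (S.isR x hi) (S.isR x (by omega : i < n)) (S.ne1 x hi).symm
    omega
  · have h1 := S.levM x hi
    have h2 := L_conj_ne (S.isR x (by omega : i < n)) (S.isR x hi) (S.ne1 x hi)
    omega

theorem ltP (S : Sys n sg st) (x : B) {i : ℕ} (hi : i + 1 < n)
    (h : lev n st (x * sg i) < lev n st x) : Lt (st x (i + 1)) (st x i) := by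
  have := S.levP x hi
  unfold Lt; omega

theorem ltM (S : Sys n sg st) (x : B) {i : ℕ} (hi : i + 1 < n)
    (h : lev n st (x * (sg i)⁻¹) < lev n st x) : Lt (st x i) (st x (i + 1)) := by
  have := S.levM x hi
  unfold Lt; omega

end Sys


/-- Three consecutive entries of a state together with the level. -/
structure H3 {B : Type*} (n : ℕ) (st : B → ℕ → W) (K : ℤ) (i : ℕ) (x : B) (a b c : W) :
    Prop where
  e1 : st x i = a
  e2 : st x (i + 1) = b
  e3 : st x (i + 2) = c
  l : (lev n st x : ℤ) = K + L a + L b + L c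

namespace Sys

variable {B : Type*} [Group B] {n : ℕ} {sg : ℕ → B} {st : B → ℕ → W}

theorem P0 (S : Sys n sg st) {K : ℤ} {i : ℕ} {x : B} {a b c b' : W} (hi : i + 2 < n)
    (h : H3 n st K i x a b c) (hb : b' = b * a * b) : H3 n st K i (x * sg i) b b' c := by
  have hl := S.levP x (i := i) (by omega)
  obtain ⟨rfl, rfl, rfl, l⟩ := h
  subst hb
  exact ⟨S.p1 x (by omega), S.p2 x (by omega), S.st3 x i _ (by omega) (by omega) (by omega)
    (by omega), by omega⟩

theorem M0 (S : Sys n sg st) {K : ℤ} {i : ℕ} {x : B} {a b c a' : W} (hi : i + 2 < n)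
    (h : H3 n st K i x a b c) (hb : a' = a * b * a) : H3 n st K i (x * (sg i)⁻¹) a' a c := by
  have hl := S.levM x (i := i) (by omega)
  obtain ⟨rfl, rfl, rfl, l⟩ := h
  subst hb
  exact ⟨S.m1 x (by omega), S.m2 x (by omega), S.inv3 x i _ (by omega) (by omega) (by omega)
    (by omega), by omega⟩

theorem P1 (S : Sys n sg st) {K : ℤ} {i : ℕ} {x : B} {a b c c' : W} (hi : i + 2 < n)
    (h : H3 n st K i x a b c) (hb : c' = c * b * c) : H3 n st K i (x * sg (i + 1)) a c c' := by
  have hl := S.levP x (i := i + 1) (by omega)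
  obtain ⟨rfl, rfl, rfl, l⟩ := h
  subst hb
  rw [show i + 1 + 1 = i + 2 from rfl] at hl
  exact ⟨S.st3 x (i + 1) _ (by omega) (by omega) (by omega) (by omega),
    S.p1 x (i := i + 1) (by omega), S.p2 x (i := i + 1) (by omega), by omega⟩

theorem M1 (S : Sys n sg st) {K : ℤ} {i : ℕ} {x : B} {a b c b' : W} (hi : i + 2 < n)
    (h : H3 n st K i x a b c) (hb : b' = b * c * b) :
    H3 n st K i (x * (sg (i + 1))⁻¹) a b' b := by
  have hl := S.levM x (i := i + 1) (by omega)
  obtain ⟨rfl, rfl, rfl, l⟩ := h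
  subst hb
  rw [show i + 1 + 1 = i + 2 from rfl] at hl
  exact ⟨S.inv3 x (i + 1) _ (by omega) (by omega) (by omega) (by omega),
    S.m1 x (i := i + 1) (by omega), S.m2 x (i := i + 1) (by omega), by omega⟩

theorem adjP (x : B) {i : ℕ} (hi : i + 1 < n) : Adj n sg x (x * sg i) := ⟨i, hi, Or.inl rfl⟩

theorem adjM (x : B) {i : ℕ} (hi : i + 1 < n) : Adj n sg x (x * (sg i)⁻¹) :=
  ⟨i, hi, Or.inr rfl⟩

theorem path4 {adj : B → B → Prop} {lv : B → ℕ} {m : ℕ} {y0 y1 y2 y3 y4 : B}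
    (a0 : adj y0 y1) (a1 : adj y1 y2) (a2 : adj y2 y3) (a3 : adj y3 y4)
    (l0 : lv y0 < m) (l1 : lv y1 < m) (l2 : lv y2 < m) (l3 : lv y3 < m) (l4 : lv y4 < m) :
    Conn adj lv m y0 y4 :=
  Conn.cons a0 l0 l1 (Conn.cons a1 l1 l2 (Conn.cons a2 l2 l3 (Conn.cons a3 l3 l4
    Relation.ReflTransGen.refl)))

theorem h3 (x : B) (i : ℕ) : ∃ K, H3 n st K i x (st x i) (st x (i + 1)) (st x (i + 2)) :=
  ⟨lev n st x - L (st x i) - L (st x (i + 1)) - L (st x (i + 2)), rfl, rfl, rfl, by ring⟩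

theorem peakPP (S : Sys n sg st) (x : B) {i : ℕ} (hi : i + 2 < n)
    (h1 : Lt (st x (i + 1)) (st x i)) (h2 : Lt (st x (i + 2)) (st x (i + 1))) :
    Conn (Adj n sg) (lev n st) (lev n st x) (x * sg i) (x * sg (i + 1)) := by
  obtain ⟨K, H⟩ := h3 (n := n) (st := st) x i
  have ha := S.isR x (show i < n by omega)
  have hb := S.isR x (show i + 1 < n by omega)
  have hc := S.isR x hi
  generalize st x i = a at *
  generalize st x (i + 1) = b at *
  generalize st x (i + 2) = c at *
  have h3 := Lt.trans hc hb ha h2 h1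
  have h4 := Lt.chain hc hb ha h2 h1
  have A0 := S.P0 hi H rfl
  have A1 := S.P1 hi A0 rfl
  have A2 := S.P0 hi A1 rfl
  have B0 := S.P1 hi H rfl
  have B1 := S.P0 hi B0 rfl
  have e : x * sg i * sg (i + 1) * sg i = x * sg (i + 1) * sg i * sg (i + 1) := by
    have := S.braid i hi
    simp only [mul_assoc] at this ⊢
    rw [this]
  unfold Lt at h1 h2 h3
  have l := H.l
  have l0 := A0.l
  have l1 := A1.l
  have l2 := A2.l
  have l3 := B1.l
  have l4 := B0.l
  refine path4 (adjP _ (i := i + 1) (by omega)) (adjP _ (i := i) (by omega))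
    (y3 := x * sg (i + 1) * sg i) ?_ (adj_symm _ _ (adjP _ (by omega))) ?_ ?_ ?_ ?_ ?_
  · rw [e]; exact adj_symm _ _ (adjP _ (by omega))
  all_goals omega

theorem peakMM (S : Sys n sg st) (x : B) {i : ℕ} (hi : i + 2 < n)
    (h1 : Lt (st x i) (st x (i + 1))) (h2 : Lt (st x (i + 1)) (st x (i + 2))) :
    Conn (Adj n sg) (lev n st) (lev n st x) (x * (sg i)⁻¹) (x * (sg (i + 1))⁻¹) := by
  obtain ⟨K, H⟩ := h3 (n := n) (st := st) x i
  have ha := S.isR x (show i < n by omega)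
  have hb := S.isR x (show i + 1 < n by omega)
  have hc := S.isR x hi
  generalize st x i = a at *
  generalize st x (i + 1) = b at *
  generalize st x (i + 2) = c at *
  have h3 := Lt.trans ha hb hc h1 h2
  have h4 := Lt.chain ha hb hc h1 h2
  have A0 := S.M0 hi H rfl
  have A1 := S.M1 hi A0 rfl
  have B0 := S.M1 hi H rfl
  have B1 := S.M0 hi B0 rfl
  have B2 := S.M1 hi B1 rfl
  have e : x * (sg i)⁻¹ * (sg (i + 1))⁻¹ * (sg i)⁻¹ =
      x * (sg (i + 1))⁻¹ * (sg i)⁻¹ * (sg (i + 1))⁻¹ := by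
    have := congrArg (fun g => x * g⁻¹) (S.braid i hi)
    simpa only [mul_assoc, mul_inv_rev] using this
  unfold Lt at h1 h2 h3
  have l := H.l
  have l0 := A0.l
  have l1 := A1.l
  have l2 := B2.l
  have l3 := B1.l
  have l4 := B0.l
  refine path4 (y1 := x * (sg i)⁻¹ * (sg (i + 1))⁻¹)
    (y2 := x * (sg (i + 1))⁻¹ * (sg i)⁻¹ * (sg (i + 1))⁻¹)
    (y3 := x * (sg (i + 1))⁻¹ * (sg i)⁻¹) (adjM _ (by omega)) ?_
    (adj_symm _ _ (adjM _ (by omega))) (adj_symm _ _ (adjM _ (by omega))) ?_ ?_ ?_ ?_ ?_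
  · rw [← e]; exact adjM _ (by omega)
  all_goals omega

theorem peakMP (S : Sys n sg st) (x : B) {i : ℕ} (hi : i + 2 < n)
    (h1 : Lt (st x i) (st x (i + 1))) (h2 : Lt (st x (i + 2)) (st x (i + 1))) :
    Conn (Adj n sg) (lev n st) (lev n st x) (x * (sg i)⁻¹) (x * sg (i + 1)) := by
  obtain ⟨K, H⟩ := h3 (n := n) (st := st) x i
  have ha := S.isR x (show i < n by omega)
  have hb := S.isR x (show i + 1 < n by omega)
  have hc := S.isR x hi
  have hne := S.ne2 x hi
  generalize st x i = a at *
  generalize st x (i + 1) = b at *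
  generalize st x (i + 2) = c at *
  have hbr := S.braid i hi
  rcases Lt.compare ha hc hb hne h1 h2 with h | h
  · have h4 := Lt.chain ha hc hb h h2
    have A0 := S.M0 hi H rfl
    have A1 := S.M1 hi A0 rfl
    have A2 := S.P0 (b' := a * (c * b * c) * a) hi A1
      (by simp only [mul_assoc, ha.sq_mul])
    have A3 := S.P1 (c' := c * b * c) hi A2
      (by simp only [mul_assoc, ha.sq_mul, ha.sq, mul_one])
    have B0 := S.P1 hi H rfl
    have e : x * (sg i)⁻¹ * (sg (i + 1))⁻¹ * sg i * sg (i + 1) * sg i = x * sg (i + 1) := by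
      simp only [mul_assoc] at hbr ⊢
      rw [hbr]; simp
    unfold Lt at h1 h2 h
    have l := H.l
    have l0 := A0.l
    have l1 := A1.l
    have l2 := A2.l
    have l3 := A3.l
    have l4 := B0.l
    refine path4 (adjM _ (i := i + 1) (by omega)) (adjP _ (i := i) (by omega))
      (adjP _ (i := i + 1) (by omega)) (e ▸ adjP _ (by omega)) ?_ ?_ ?_ ?_ ?_
    all_goals omega
  · have h4 := Lt.chain hc ha hb h h1
    have A0 := S.P1 hi H rfl
    have A1 := S.P0 hi A0 rfl
    have A2 := S.M1 (b' := c * (a * b * a) * c) hi A1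
      (by simp only [mul_assoc, hc.sq_mul])
    have A3 := S.M0 (a' := a * b * a) hi A2
      (by simp only [mul_assoc, hc.sq_mul, hc.sq, mul_one])
    have B0 := S.M0 hi H rfl
    have e : x * sg (i + 1) * sg i * (sg (i + 1))⁻¹ * (sg i)⁻¹ * (sg (i + 1))⁻¹ =
        x * (sg i)⁻¹ := by
      have : sg (i + 1) * sg i = (sg i)⁻¹ * (sg (i + 1) * sg i * sg (i + 1)) := by
        rw [← hbr]; group
      rw [mul_assoc x, this]; group
    unfold Lt at h1 h2 h
    have l := H.l
    have l0 := A0.l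
    have l1 := A1.l
    have l2 := A2.l
    have l3 := A3.l
    have l4 := B0.l
    refine Conn.symm adj_symm
      (path4 (adjP _ (i := i) (by omega)) (adjM _ (i := i + 1) (by omega))
      (adjM _ (i := i) (by omega)) (e ▸ adjM _ (by omega)) ?_ ?_ ?_ ?_ ?_)
    all_goals omega

theorem path2 {adj : B → B → Prop} {lv : B → ℕ} {m : ℕ} {y0 y1 y2 : B}
    (a0 : adj y0 y1) (a1 : adj y1 y2)
    (l0 : lv y0 < m) (l1 : lv y1 < m) (l2 : lv y2 < m) :
    Conn adj lv m y0 y2 :=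
  Conn.cons a0 l0 l1 (Conn.cons a1 l1 l2 Relation.ReflTransGen.refl)

theorem peakFar (S : Sys n sg st) (x : B) {i j : ℕ} (hij : i + 1 < j) (hj : j + 1 < n)
    {y z : B} (hy : y = x * sg i ∨ y = x * (sg i)⁻¹) (hz : z = x * sg j ∨ z = x * (sg j)⁻¹)
    (ly : lev n st y < lev n st x) (lz : lev n st z < lev n st x) :
    Conn (Adj n sg) (lev n st) (lev n st x) y z := by
  have hc : Commute (sg i) (sg j) := S.comm i j hij hj
  have hs1 : st y j = st x j := by
    rcases hy with rfl | rfl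
    · exact S.st3 x i _ (by omega) (by omega) (by omega) (by omega)
    · exact S.inv3 x i _ (by omega) (by omega) (by omega) (by omega)
  have hs2 : st y (j + 1) = st x (j + 1) := by
    rcases hy with rfl | rfl
    · exact S.st3 x i _ (by omega) (by omega) (by omega) (by omega)
    · exact S.inv3 x i _ (by omega) (by omega) (by omega) (by omega)
  rcases hz with rfl | rfl
  · have l1 := S.levP x hj
    have l2 := S.levP y hj
    rw [hs1, hs2] at l2
    refine path2 (y1 := y * sg j) (adjP _ hj) ?_ ly (by omega) lz
    apply adj_symm
    rcases hy with rfl | rfl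
    · exact ⟨i, by omega, Or.inl (by rw [mul_assoc, mul_assoc, hc.eq])⟩
    · exact ⟨i, by omega, Or.inr (by rw [mul_assoc, mul_assoc, hc.inv_left.eq])⟩
  · have l1 := S.levM x hj
    have l2 := S.levM y hj
    rw [hs1, hs2] at l2
    refine path2 (y1 := y * (sg j)⁻¹) (adjM _ hj) ?_ ly (by omega) lz
    apply adj_symm
    rcases hy with rfl | rfl
    · exact ⟨i, by omega, Or.inl (by rw [mul_assoc, mul_assoc, hc.inv_right.eq])⟩
    · exact ⟨i, by omega, Or.inr (by rw [mul_assoc, mul_assoc, hc.inv_left.inv_right.eq])⟩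

theorem peakNear (S : Sys n sg st) (x : B) {i : ℕ} (hi : i + 2 < n)
    {y z : B} (hy : y = x * sg i ∨ y = x * (sg i)⁻¹)
    (hz : z = x * sg (i + 1) ∨ z = x * (sg (i + 1))⁻¹)
    (ly : lev n st y < lev n st x) (lz : lev n st z < lev n st x) :
    Conn (Adj n sg) (lev n st) (lev n st x) y z := by
  rcases hy with rfl | rfl <;> rcases hz with rfl | rfl
  · exact S.peakPP x hi (S.ltP x (by omega) ly) (S.ltP x (i := i + 1) hi lz)
  · exact (S.noV x hi (S.ltP x (by omega) ly) (S.ltM x (i := i + 1) hi lz)).elim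
  · exact S.peakMP x hi (S.ltM x (by omega) ly) (S.ltP x (i := i + 1) hi lz)
  · exact S.peakMM x hi (S.ltM x (by omega) ly) (S.ltM x (i := i + 1) hi lz)

theorem peak (S : Sys n sg st) (x y z : B) (hy : Adj n sg x y) (hz : Adj n sg x z)
    (ly : lev n st y < lev n st x) (lz : lev n st z < lev n st x) :
    Conn (Adj n sg) (lev n st) (lev n st x) y z := by
  obtain ⟨i, hi, hy⟩ := hy
  obtain ⟨j, hj, hz⟩ := hz
  rcases lt_trichotomy i j with h | h | h
  · by_cases h' : i + 1 < j
    · exact S.peakFar x h' hj hy hz ly lz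
    · obtain rfl : j = i + 1 := by omega
      exact S.peakNear x hj hy hz ly lz
  · subst h
    have ha := S.isR x (show i < n by omega)
    have hb := S.isR x hi
    rcases hy with rfl | rfl <;> rcases hz with rfl | rfl
    · exact Relation.ReflTransGen.refl
    · exact (Lt.asymm hb ha (S.ltP x hi ly) (S.ltM x hi lz)).elim
    · exact (Lt.asymm ha hb (S.ltM x hi ly) (S.ltP x hi lz)).elim
    · exact Relation.ReflTransGen.refl
  · apply Conn.symm adj_symm
    by_cases h' : j + 1 < i
    · exact S.peakFar x h' hi hz hy lz ly
    · obtain rfl : i = j + 1 := by omega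
      exact S.peakNear x hi hz hy lz ly

theorem conn_one (S : Sys n sg st) (x : B) : ∃ m, Conn (Adj n sg) (lev n st) m 1 x := by
  have hx : x ∈ Subgroup.closure {x | ∃ i, i + 1 < n ∧ x = sg i} := by rw [S.gen]; trivial
  have key : ∀ x y : B, Adj n sg x y → (∃ m, Conn (Adj n sg) (lev n st) m 1 x) →
      ∃ m, Conn (Adj n sg) (lev n st) m 1 y := by
    rintro x y h ⟨m, hm⟩
    exact ⟨m + lev n st x + lev n st y + 1,
      Relation.ReflTransGen.tail (Conn.mono (by omega) hm) ⟨h, by omega, by omega⟩⟩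
  induction hx using Subgroup.closure_induction_right with
  | one => exact ⟨0, Relation.ReflTransGen.refl⟩
  | mul_right x _ y hy ih =>
    obtain ⟨i, hi, rfl⟩ := hy
    exact key _ _ (adjP _ hi) ih
  | mul_inv_cancel x _ y hy ih =>
    obtain ⟨i, hi, rfl⟩ := hy
    exact key _ _ (adjM _ hi) ih

theorem core (S : Sys n sg st) (x : B) (hx : ∀ k < n, st x k = s k) : x = 1 := by
  obtain ⟨m, hm⟩ := S.conn_one x
  have hl : ∀ y : B, (∀ k < n, st y k = s k) → lev n st y = n := by
    intro y hy
    unfold lev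
    rw [Finset.sum_congr rfl (g := fun _ => 1)
      (fun k hk => by rw [hy k (Finset.mem_range.1 hk), L_s])]
    simp
  refine (Conn.eq adj_symm S.lev_ne S.peak (p := n) ?_ (hl 1 S.one) (hl x hx) hm).symm
  intro y
  have : ∑ k ∈ Finset.range n, 1 ≤ lev n st y :=
    Finset.sum_le_sum fun k hk => (S.isR y (Finset.mem_range.1 hk)).L_pos
  simpa using this

end Sys

end WadaThree

/-- **Wada's representation of type (3) is faithful.** For every `n ≥ 2`, any group
homomorphism `ψ : B_n → Aut(F_n)` sending each braid generator `σ_i` to the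
automorphism with `x_i ↦ x_i^2 x_{i+1}`, `x_{i+1} ↦ x_{i+1}⁻¹ x_i⁻¹ x_{i+1}`, fixing
all other free generators, is injective. -/
theorem wada_type3_faithful (n : ℕ) (hn : 2 ≤ n)
    (ψ : PresentedGroup (braidRels (n - 1)) →* MulAut (FreeGroup (Fin n)))
    (hψ : ∀ i : Fin (n - 1),
      (ψ (PresentedGroup.of i)) (FreeGroup.of (xL n i)) =
          FreeGroup.of (xL n i) ^ 2 * FreeGroup.of (xR n i) ∧
      (ψ (PresentedGroup.of i)) (FreeGroup.of (xR n i)) =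
          (FreeGroup.of (xR n i))⁻¹ * (FreeGroup.of (xL n i))⁻¹ * FreeGroup.of (xR n i) ∧
      ∀ j : Fin n, j ≠ xL n i → j ≠ xR n i →
        (ψ (PresentedGroup.of i)) (FreeGroup.of j) = FreeGroup.of j) :
    Function.Injective ψ := by
  classical
  let f : FreeGroup (Fin n) →* WadaThree.W := FreeGroup.lift (fun j : Fin n => WadaThree.s j)
  let sg : ℕ → PresentedGroup (braidRels (n - 1)) :=
    fun i => if h : i < n - 1 then PresentedGroup.of ⟨i, h⟩ else 1
  let st : PresentedGroup (braidRels (n - 1)) → ℕ → WadaThree.W :=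
    fun x k => if h : k < n then f (ψ x (FreeGroup.of ⟨k, h⟩)) else 1
  have hsg : ∀ i (h : i < n - 1), sg i = PresentedGroup.of ⟨i, h⟩ := fun i h => dif_pos h
  have hst : ∀ x k (h : k < n), st x k = f (ψ x (FreeGroup.of ⟨k, h⟩)) :=
    fun x k h => dif_pos h
  have hf : ∀ k (h : k < n), f (FreeGroup.of ⟨k, h⟩) = WadaThree.s k := by
    intro k h
    simp [f]
  have S : WadaThree.Sys n sg st := by
    refine ⟨?_, ?_, ?_, ?_, ?_, ?_, ?_⟩
    · intro i j hij hj
      rw [hsg i (by omega), hsg j (by omega)]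
      have hr : FreeGroup.of (⟨i, by omega⟩ : Fin (n - 1)) * FreeGroup.of ⟨j, by omega⟩ *
          (FreeGroup.of ⟨i, by omega⟩)⁻¹ * (FreeGroup.of ⟨j, by omega⟩)⁻¹ ∈
          braidRels (n - 1) := Or.inl ⟨_, _, hij, rfl⟩
      have h := PresentedGroup.one_of_mem hr
      simp only [map_mul, map_inv] at h
      exact eq_mul_of_mul_inv_eq (eq_of_mul_inv_eq_one h)
    · intro i hi
      rw [hsg i (by omega), hsg (i + 1) (by omega)]
      have hr : FreeGroup.of (⟨i, by omega⟩ : Fin (n - 1)) * FreeGroup.of ⟨i + 1, by omega⟩ *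
          FreeGroup.of ⟨i, by omega⟩ * (FreeGroup.of ⟨i + 1, by omega⟩ *
          FreeGroup.of ⟨i, by omega⟩ * FreeGroup.of ⟨i + 1, by omega⟩)⁻¹ ∈
          braidRels (n - 1) := Or.inr ⟨_, _, rfl, rfl⟩
      have h := PresentedGroup.one_of_mem hr
      rw [map_mul, map_inv] at h
      have h2 := eq_of_mul_inv_eq_one h
      simp only [map_mul] at h2
      exact h2
    · rw [← PresentedGroup.closure_range_of (braidRels (n - 1))]
      congr 1
      ext y
      constructor
      · rintro ⟨i, hi, rfl⟩
        exact ⟨⟨i, by omega⟩, (hsg i _).symm⟩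
      · rintro ⟨i, rfl⟩
        have := i.isLt
        exact ⟨i, by omega, (hsg i this).symm⟩
    · intro k hk
      rw [hst 1 k hk, map_one, MulAut.one_apply, hf]
    · intro x i hi
      rw [hst _ i (by omega), hst x i (by omega), hst x (i + 1) hi, hsg i (by omega), map_mul,
        MulAut.mul_apply]
      have h := (hψ ⟨i, by omega⟩).1
      simp only [xL, xR] at h
      rw [h, map_mul, map_mul, map_pow, map_pow, pow_two]
    · intro x i hi
      rw [hst _ (i + 1) hi, hst x i (by omega), hst x (i + 1) hi, hsg i (by omega), map_mul,
        MulAut.mul_apply]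
      have h := (hψ ⟨i, by omega⟩).2.1
      simp only [xL, xR] at h
      rw [h]
      simp only [map_mul, map_inv]
    · intro x i k hi hk h1 h2
      rw [hst _ k hk, hst x k hk, hsg i (by omega), map_mul, MulAut.mul_apply]
      have h := (hψ ⟨i, by omega⟩).2.2 ⟨k, hk⟩
        (by simpa [xL] using h1) (by simpa [xR] using h2)
      rw [h]
  rw [injective_iff_map_eq_one]
  intro x hx
  refine S.core x (fun k hk => ?_)
  rw [hst x k hk, hx, MulAut.one_apply, hf]
end
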